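/- arXiv:2404.03644 — 5 statements merged into one kernel-verified Lean document; each statement's English description precedes it below -/
import Mathlib

section
/- There exists a universal constant C > 0 with the following property. Let r ∈ (0, 1], δ ∈ (0, r], and let (a_k)_{k≥0} be a sequence of complex numbers such that the series Σ_{k=0}^∞ a_k x^k converges absolutely for all x ∈ [−r−δ, r+δ]; let f(x) = Σ_{k=0}^∞ a_k x^k on this interval. Let B > 0 satisfy B ≥ Σ_{k=0}^∞ |a_k|(r+δ)^k, and let ε ∈ (0, 3B/2). Then there exists a polynomial P with complex coefficients of degree at most C·(1/δ)·log(12B/ε) such that sup_{x ∈ [−r, r]} |f(x) − P(x)| ≤ ε and sup_{x ∈ [−1, 1]} |P(x)| ≤ ε + sup_{x ∈ [−r−δ/2, r+δ/2]} |f(x)|. -/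
/-- finite combinations of elements of `E` with absolute coefficient sum at most `M`. -/
inductive Comb (E : Set (ℝ → ℂ)) : ℝ → (ℝ → ℂ) → Prop
  | zero : Comb E 0 (fun _ => 0)
  | step {M : ℝ} {g : ℝ → ℂ} (c : ℂ) (e : ℝ → ℂ) :
      e ∈ E → Comb E M g → Comb E (M + ‖c‖) (fun x => g x + c * e x)
  | le {M M' : ℝ} {g : ℝ → ℂ} : M ≤ M' → Comb E M g → Comb E M' g

namespace Comb

variable {E : Set (ℝ → ℂ)}

theorem zero' {M : ℝ} (h : 0 ≤ M) : Comb E M (fun _ => 0) := .le h .zero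

theorem nonneg {M : ℝ} {g : ℝ → ℂ} (h : Comb E M g) : 0 ≤ M := by
  induction h with
  | zero => exact le_rfl
  | step c e he hg ih => positivity
  | le h1 h2 ih => linarith

theorem of_mem {e : ℝ → ℂ} (h : e ∈ E) : Comb E 1 e := by
  have := Comb.step 1 e h Comb.zero
  simpa using this

theorem smul {M : ℝ} {g : ℝ → ℂ} (h : Comb E M g) (c : ℂ) :
    Comb E (‖c‖ * M) (fun x => c * g x) := by
  induction h with
  | zero => simpa using Comb.zero
  | step c' e he hg ih =>
    have := Comb.step (c * c') e he ih
    simpa [mul_add, mul_assoc] using this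
  | le h1 h2 ih => exact .le (by gcongr) ih

theorem add {M N : ℝ} {g k : ℝ → ℂ} (h : Comb E M g) (h' : Comb E N k) :
    Comb E (M + N) (fun x => g x + k x) := by
  induction h' with
  | zero => simpa using h
  | step c' e he hg ih =>
    have := Comb.step c' e he ih
    simpa [add_assoc] using this
  | le h1 h2 ih => exact .le (by gcongr) ih

theorem sum {ι : Type} (s : Finset ι) {M : ι → ℝ} {g : ι → ℝ → ℂ}
    (h : ∀ i ∈ s, Comb E (M i) (g i)) :
    Comb E (∑ i ∈ s, M i) (fun x => ∑ i ∈ s, g i x) := by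
  classical
  induction s using Finset.induction_on with
  | empty => simpa using Comb.zero
  | insert a s ha ih =>
    have h1 := (h a (by simp)).add (ih fun i hi => h i (by simp [hi]))
    simpa [Finset.sum_insert ha] using h1

theorem approx {E' : Set (ℝ → ℂ)} {X : Set ℝ} {K : ℝ} {M : ℝ} {g : ℝ → ℂ}
    (h : Comb E M g)
    (hE : ∀ e ∈ E, ∃ k, Comb E' 1 k ∧ ∀ x ∈ X, ‖e x - k x‖ ≤ K) (hK : 0 ≤ K) :
    ∃ k, Comb E' M k ∧ ∀ x ∈ X, ‖g x - k x‖ ≤ M * K := by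
  induction h with
  | zero => exact ⟨_, .zero, by simp⟩
  | @step M g c e he hg ih =>
    obtain ⟨k, hk, hk'⟩ := ih
    obtain ⟨j, hj, hj'⟩ := hE e he
    refine ⟨_, hk.add (by simpa using hj.smul c), fun x hx => ?_⟩
    have h1 := hk' x hx
    have h2 := hj' x hx
    calc ‖g x + c * e x - (k x + c * j x)‖ = ‖(g x - k x) + c * (e x - j x)‖ := by ring_nf
      _ ≤ ‖g x - k x‖ + ‖c‖ * ‖e x - j x‖ := by
        refine (norm_add_le _ _).trans ?_
        rw [norm_mul]
      _ ≤ M * K + ‖c‖ * K := by gcongr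
      _ = _ := by ring
  | le h1 h2 ih =>
    obtain ⟨k, hk, hk'⟩ := ih
    exact ⟨k, .le h1 hk, fun x hx => (hk' x hx).trans (by gcongr)⟩

theorem approx_poly {X : Set ℝ} {K : ℝ} {M : ℝ} {g : ℝ → ℂ} {n : ℕ}
    (h : Comb E M g)
    (hE : ∀ e ∈ E, ∃ P : Polynomial ℂ, P.natDegree ≤ n ∧
      ∀ x ∈ X, ‖e x - P.eval (x : ℂ)‖ ≤ K) (hK : 0 ≤ K) :
    ∃ P : Polynomial ℂ, P.natDegree ≤ n ∧ ∀ x ∈ X, ‖g x - P.eval (x : ℂ)‖ ≤ M * K := by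
  induction h with
  | zero => exact ⟨0, by simp, by simp⟩
  | @step M g c e he hg ih =>
    obtain ⟨k, hk, hk'⟩ := ih
    obtain ⟨j, hj, hj'⟩ := hE e he
    refine ⟨k + Polynomial.C c * j, ?_, fun x hx => ?_⟩
    · refine (Polynomial.natDegree_add_le _ _).trans (max_le hk ?_)
      exact (Polynomial.natDegree_C_mul_le _ _).trans hj
    have h1 := hk' x hx
    have h2 := hj' x hx
    calc ‖g x + c * e x - (k + Polynomial.C c * j).eval (x : ℂ)‖
        = ‖(g x - k.eval (x : ℂ)) + c * (e x - j.eval (x : ℂ))‖ := by simp; ring_nf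
      _ ≤ ‖g x - k.eval (x : ℂ)‖ + ‖c‖ * ‖e x - j.eval (x : ℂ)‖ := by
        refine (norm_add_le _ _).trans ?_
        rw [norm_mul]
      _ ≤ M * K + ‖c‖ * K := by gcongr
      _ = _ := by ring
  | le h1 h2 ih =>
    obtain ⟨k, hk, hk'⟩ := ih
    exact ⟨k, hk, fun x hx => (hk' x hx).trans (by gcongr)⟩

theorem bound {M : ℝ} {g : ℝ → ℂ} (h : Comb E M g) (x : ℝ) (hE : ∀ e ∈ E, ‖e x‖ ≤ 1) :
    ‖g x‖ ≤ M := by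
  induction h with
  | zero => simp
  | @step M g c e he hg ih =>
    calc ‖g x + c * e x‖ ≤ ‖g x‖ + ‖c‖ * ‖e x‖ := by
          refine (norm_add_le _ _).trans ?_
          rw [norm_mul]
      _ ≤ M + ‖c‖ * 1 := by gcongr; exact hE e he
      _ = _ := by ring
  | le h1 h2 ih => linarith

theorem mul_mem {E₁ E₂ E₃ : Set (ℝ → ℂ)} {M : ℝ} {g e : ℝ → ℂ} (h : Comb E₁ M g)
    (he : e ∈ E₂) (hE : ∀ e ∈ E₁, ∀ f ∈ E₂, (fun x => e x * f x) ∈ E₃) :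
    Comb E₃ M (fun x => g x * e x) := by
  induction h with
  | zero => simpa using Comb.zero
  | @step M g c e' he' hg ih =>
    have := Comb.step c _ (hE e' he' e he) ih
    simpa [add_mul, mul_assoc] using this
  | le h1 h2 ih => exact .le h1 ih

theorem mul {E₁ E₂ E₃ : Set (ℝ → ℂ)} {M N : ℝ} {g k : ℝ → ℂ} (h : Comb E₁ M g)
    (h' : Comb E₂ N k) (hE : ∀ e ∈ E₁, ∀ f ∈ E₂, (fun x => e x * f x) ∈ E₃) :
    Comb E₃ (M * N) (fun x => g x * k x) := by
  induction h' with
  | zero => simpa using Comb.zero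
  | @step N k c e' he' hg ih =>
    have := ih.add ((h.mul_mem he' hE).smul c)
    convert this using 1
    · ring
    · ext x; ring
  | le h1 h2 ih =>
    have := h.nonneg
    exact .le (by gcongr) ih

end Comb

/-- exponentials of frequency at most `τ` -/
def Eexp (τ : ℝ) : Set (ℝ → ℂ) :=
  {g | ∃ t : ℝ, |t| ≤ τ ∧ g = fun x : ℝ => Complex.exp (Complex.I * (t * x : ℝ))}

/-- powers of `sin (c x)` -/
def Esin (c : ℝ) : Set (ℝ → ℂ) :=
  {g | ∃ l : ℕ, g = fun x : ℝ => ((Real.sin (c * x) ^ l : ℝ) : ℂ)}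

theorem Eexp_mul {τ₁ τ₂ : ℝ} : ∀ e ∈ Eexp τ₁, ∀ f ∈ Eexp τ₂,
    (fun x => e x * f x) ∈ Eexp (τ₁ + τ₂) := by
  rintro _ ⟨t, ht, rfl⟩ _ ⟨s, hs, rfl⟩
  refine ⟨t + s, (abs_add_le _ _).trans (by gcongr), ?_⟩
  ext x
  rw [← Complex.exp_add]
  congr 1
  push_cast
  ring

theorem Eexp_norm {τ : ℝ} (x : ℝ) : ∀ e ∈ Eexp τ, ‖e x‖ ≤ 1 := by
  rintro _ ⟨t, ht, rfl⟩
  simp [Complex.norm_exp]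

theorem Esin_mul {c : ℝ} : ∀ e ∈ Esin c, ∀ f ∈ Esin c,
    (fun x => e x * f x) ∈ Esin c := by
  rintro _ ⟨t, rfl⟩ _ ⟨s, rfl⟩
  refine ⟨t + s, ?_⟩
  ext x
  push_cast
  ring

theorem Esin_norm {c : ℝ} (x : ℝ) : ∀ e ∈ Esin c, ‖e x‖ ≤ 1 := by
  rintro _ ⟨t, rfl⟩
  rw [Complex.norm_real, Real.norm_eq_abs, abs_pow]
  exact pow_le_one₀ (abs_nonneg _) (Real.abs_sin_le_one _)

theorem Esin_pow {c : ℝ} {v : ℝ → ℂ} (hv : Comb (Esin c) 1 v) (k : ℕ) :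
    Comb (Esin c) 1 (fun x => v x ^ k) := by
  induction k with
  | zero =>
    refine Comb.of_mem ⟨0, ?_⟩
    ext; simp
  | succ k ih => simpa [pow_succ] using ih.mul hv Esin_mul

/-- binomial tail bound -/
theorem binom_tail (l : ℕ) (d lam : ℝ) (hl : 0 ≤ lam) :
    ∑ m ∈ (Finset.range (l + 1)).filter (fun m : ℕ => d < |2 * (m : ℝ) - l|),
      (l.choose m : ℝ) / 2 ^ l ≤ 2 * Real.exp (-lam * d + lam ^ 2 * l / 2) := by
  have key : ∀ s : ℝ, ∑ m ∈ Finset.range (l + 1),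
      (l.choose m : ℝ) / 2 ^ l * Real.exp (s * (2 * m - l)) = Real.cosh s ^ l := by
    intro s
    rw [Real.cosh_eq, div_pow, add_pow, Finset.sum_div]
    refine Finset.sum_congr rfl fun m hm => ?_
    have hm' : m ≤ l := by simpa [Nat.lt_succ_iff] using hm
    rw [← Real.exp_nat_mul, ← Real.exp_nat_mul, ← Real.exp_add]
    rw [Nat.cast_sub hm']
    have : (m : ℝ) * s + ((l : ℝ) - m) * -s = s * (2 * m - l) := by ring
    rw [this]; ring
  have hc : Real.cosh lam ^ l ≤ Real.exp (lam ^ 2 * l / 2) := by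
    calc Real.cosh lam ^ l ≤ Real.exp (lam ^ 2 / 2) ^ l := by
          gcongr
          exact Real.cosh_le_exp_half_sq lam
      _ = _ := by rw [← Real.exp_nat_mul]; ring_nf
  calc _ ≤ ∑ m ∈ (Finset.range (l + 1)).filter (fun m : ℕ => d < |2 * (m : ℝ) - l|),
      Real.exp (-lam * d) * ((l.choose m : ℝ) / 2 ^ l * Real.exp (lam * (2 * m - l)) +
        (l.choose m : ℝ) / 2 ^ l * Real.exp (-lam * (2 * m - l))) := by
        refine Finset.sum_le_sum fun m hm => ?_
        have hd : d < |2 * (m : ℝ) - l| := (Finset.mem_filter.mp hm).2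
        rw [← mul_add, mul_left_comm]
        refine le_mul_of_one_le_right (by positivity) ?_
        rw [mul_add, ← Real.exp_add, ← Real.exp_add]
        rcases abs_cases (2 * (m : ℝ) - l) with ⟨h, _⟩ | ⟨h, _⟩
        · have : 1 ≤ Real.exp (-lam * d + lam * (2 * m - l)) := by
            apply Real.one_le_exp
            rw [h] at hd; nlinarith
          have := Real.exp_pos (-lam * d + -lam * (2 * m - l))
          linarith
        · have : 1 ≤ Real.exp (-lam * d + -lam * (2 * m - l)) := by
            apply Real.one_le_exp
            rw [h] at hd; nlinarith
          have := Real.exp_pos (-lam * d + lam * (2 * m - l))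
          linarith
    _ ≤ ∑ m ∈ Finset.range (l + 1),
      Real.exp (-lam * d) * ((l.choose m : ℝ) / 2 ^ l * Real.exp (lam * (2 * m - l)) +
        (l.choose m : ℝ) / 2 ^ l * Real.exp (-lam * (2 * m - l))) := by
        refine Finset.sum_le_sum_of_subset_of_nonneg (Finset.filter_subset _ _) ?_
        intros; positivity
    _ = Real.exp (-lam * d) * (2 * Real.cosh lam ^ l) := by
        rw [← Finset.mul_sum, Finset.sum_add_distrib, key, key, Real.cosh_neg]; ring
    _ ≤ Real.exp (-lam * d) * (2 * Real.exp (lam ^ 2 * l / 2)) := by gcongr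
    _ = _ := by rw [Real.exp_add]; ring

theorem binom_total (l : ℕ) : ∑ m ∈ Finset.range (l + 1), (l.choose m : ℝ) / 2 ^ l = 1 := by
  rw [← Finset.sum_div]
  have := Nat.sum_range_choose l
  have h2 : (∑ m ∈ Finset.range (l + 1), (l.choose m : ℝ)) = 2 ^ l := by exact_mod_cast this
  rw [h2]; simp

theorem sin_trunc (c : ℝ) (hc : 0 ≤ c) (l : ℕ) (d lam : ℝ) (hl : 0 ≤ lam) :
    ∃ k, Comb (Eexp (c * d)) 1 k ∧ ∀ x : ℝ,
      ‖((Real.sin (c * x) ^ l : ℝ) : ℂ) - k x‖ ≤ 2 * Real.exp (-lam * d + lam ^ 2 * l / 2) := by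
  classical
  let co : ℕ → ℂ := fun m => (1 / (2 * Complex.I)) ^ m * (-1 / (2 * Complex.I)) ^ (l - m) *
    (l.choose m : ℂ)
  have hco : ∀ m ∈ Finset.range (l + 1), ‖co m‖ = (l.choose m : ℝ) / 2 ^ l := by
    intro m hm
    have hm' : m ≤ l := by simpa [Nat.lt_succ_iff] using hm
    simp only [co, norm_mul, norm_pow, norm_div, norm_neg, norm_one, Complex.norm_I,
      Complex.norm_natCast, Complex.norm_ofNat, mul_one]
    rw [← pow_add, Nat.add_sub_cancel' hm', one_div_pow]
    ring
  have hexp : ∀ x : ℝ, ((Real.sin (c * x) ^ l : ℝ) : ℂ) = ∑ m ∈ Finset.range (l + 1),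
      co m * Complex.exp (Complex.I * ((c * (2 * m - l)) * x : ℝ)) := by
    intro x
    have h1 : ((Real.sin (c * x) : ℝ) : ℂ) =
        1 / (2 * Complex.I) * Complex.exp (Complex.I * (c * x)) +
        -1 / (2 * Complex.I) * Complex.exp (-(Complex.I * (c * x))) := by
      rw [Complex.ofReal_sin, Complex.sin]
      push_cast
      field_simp
      rw [Complex.I_sq]
      ring_nf
    rw [Complex.ofReal_pow, h1, add_pow]
    refine Finset.sum_congr rfl fun m hm => ?_
    have hm' : m ≤ l := by simpa [Nat.lt_succ_iff] using hm
    simp only [co]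
    rw [mul_pow, mul_pow, ← Complex.exp_nat_mul, ← Complex.exp_nat_mul]
    have : Complex.exp (Complex.I * ((c * (2 * m - l)) * x : ℝ)) =
        Complex.exp (m * (Complex.I * (c * x))) *
        Complex.exp (((l - m : ℕ) : ℂ) * -(Complex.I * (c * x))) := by
      rw [← Complex.exp_add, Nat.cast_sub hm']
      congr 1
      push_cast; ring
    rw [this]; ring
  refine ⟨fun x => ∑ m ∈ (Finset.range (l + 1)).filter (fun m : ℕ => ¬ d < |2 * (m : ℝ) - l|),
      co m * Complex.exp (Complex.I * ((c * (2 * m - l)) * x : ℝ)), ?_, fun x => ?_⟩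
  · refine Comb.le ?_ (Comb.sum (M := fun m => ‖co m‖) _ fun m hm => ?_)
    · rw [← binom_total l]
      refine (Finset.sum_le_sum_of_subset_of_nonneg (Finset.filter_subset _ _) ?_).trans
        (Finset.sum_congr rfl hco).le
      intros; positivity
    · have := (Comb.of_mem (E := Eexp (c * d)) (e := fun x : ℝ =>
        Complex.exp (Complex.I * ((c * (2 * m - l)) * x : ℝ))) ⟨_, ?_, rfl⟩).smul (co m)
      · simpa using this
      · rw [abs_mul, abs_of_nonneg hc]
        gcongr
        simpa using (Finset.mem_filter.mp hm).2
  · rw [hexp, ← Finset.sum_filter_add_sum_filter_not _ (fun m : ℕ => d < |2 * (m : ℝ) - l|),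
      add_sub_cancel_right]
    refine (norm_sum_le _ _).trans (le_trans (le_of_eq ?_) (binom_tail l d lam hl))
    refine Finset.sum_congr rfl fun m hm => ?_
    rw [norm_mul, hco m (Finset.mem_filter.mp hm).1, mul_comm Complex.I,
      Complex.norm_exp_ofReal_mul_I, mul_one]

theorem exp_poly (τ : ℝ) (n : ℕ) (hn : 8 * τ ≤ n) :
    ∀ e ∈ Eexp τ, ∃ P : Polynomial ℂ, P.natDegree ≤ n ∧
      ∀ x ∈ Set.Icc (-1 : ℝ) 1, ‖e x - P.eval (x : ℂ)‖ ≤ 2 * Real.exp (-n) := by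
  rintro _ ⟨t, ht, rfl⟩
  have hτ : 0 ≤ τ := (abs_nonneg _).trans ht
  refine ⟨∑ m ∈ Finset.range n, Polynomial.C ((Complex.I * t) ^ m / m.factorial) *
    Polynomial.X ^ m, ?_, fun x hx => ?_⟩
  · refine Polynomial.natDegree_sum_le_of_forall_le _ _ fun m hm => ?_
    refine (Polynomial.natDegree_C_mul_X_pow_le _ _).trans (by simp at hm; omega)
  · have hx' : |x| ≤ 1 := abs_le.mpr hx
    have hz : ‖Complex.I * ((t * x : ℝ) : ℂ)‖ ≤ τ := by
      rw [norm_mul, Complex.norm_I, one_mul, Complex.norm_real, Real.norm_eq_abs, abs_mul]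
      nlinarith [abs_nonneg x, abs_nonneg t]
    have h1 := Complex.exp_bound' (x := Complex.I * ((t * x : ℝ) : ℂ)) (n := n) (by
      rw [div_le_iff₀ (by positivity)]
      rw [Nat.cast_succ]
      linarith)
    have h2 : (∑ m ∈ Finset.range n, Polynomial.C ((Complex.I * t) ^ m / m.factorial) *
        Polynomial.X ^ m : Polynomial ℂ).eval (x : ℂ) =
        ∑ m ∈ Finset.range n, (Complex.I * ((t * x : ℝ) : ℂ)) ^ m / m.factorial := by
      rw [Polynomial.eval_finsetSum]
      refine Finset.sum_congr rfl fun m _ => ?_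
      simp; ring
    rw [h2]
    refine h1.trans ?_
    rw [mul_comm]
    gcongr
    have h3 : (n : ℝ) ^ n / n.factorial ≤ Real.exp n := Real.pow_div_factorial_le_exp (n : ℝ) (by positivity) n
    have h8 : Real.exp 2 ≤ 8 := by
      have := Real.exp_one_lt_d9
      have h : Real.exp 2 = Real.exp 1 ^ 2 := by rw [← Real.exp_nat_mul]; norm_num
      rw [h]; nlinarith [Real.exp_pos 1]
    calc ‖Complex.I * ((t * x : ℝ) : ℂ)‖ ^ n / n.factorial ≤ (n / 8) ^ n / n.factorial := by
          gcongr; linarith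
      _ = (n : ℝ) ^ n / n.factorial * (1 / 8) ^ n := by rw [div_pow, one_div_pow]; ring
      _ ≤ Real.exp n * (Real.exp (-2)) ^ n := by
          gcongr
          rw [Real.exp_neg, one_div]
          exact inv_anti₀ (Real.exp_pos _) h8
      _ = Real.exp (-n) := by
          rw [← Real.exp_nat_mul, ← Real.exp_add]; ring_nf

theorem asin_coef : ∃ b : ℕ → ℝ, (∀ n, 0 ≤ b n) ∧
    ∀ v : ℝ, |v| < 1 → HasSum (fun n => b n * v ^ n) (1 / Real.sqrt (1 - v)) := by
  refine ⟨fun n => Ring.choose ((1/2 : ℝ) + n - 1) n, fun n => ?_, fun v hv => ?_⟩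
  · change 0 ≤ Ring.choose ((1/2 : ℝ) + n - 1) n
    rw [Ring.choose_eq_smul, Polynomial.descPochhammer_smeval_eq_ascPochhammer]
    have h : (1/2 : ℝ) + n - 1 - n + 1 = 1/2 := by ring
    rw [h, Polynomial.ascPochhammer_smeval_eq_eval, smul_eq_mul]
    have := ascPochhammer_pos n (1/2 : ℝ) (by norm_num)
    positivity
  · have h := Real.one_div_one_sub_rpow_hasFPowerSeriesOnBall_zero (1/2)
    have h2 := h.hasSum (y := v) (by
      simpa [enorm_eq_nnnorm, ← NNReal.coe_lt_coe] using hv)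
    simp only [FormalMultilinearSeries.ofScalars_apply_eq, smul_eq_mul, zero_add,
      ← Real.sqrt_eq_rpow] at h2
    exact h2

theorem asin_poly (y0 : ℝ) (h0 : 0 ≤ y0) (h1 : y0 < 1) (κ : ℝ) (hκ : 0 < κ) :
    ∃ (N : ℕ) (β : ℕ → ℝ), (∀ n, 0 ≤ β n) ∧ ∑ n ∈ Finset.range N, β n ≤ Real.pi / 2 ∧
      ∀ y : ℝ, |y| ≤ y0 →
        |Real.arcsin y - ∑ n ∈ Finset.range N, β n * y ^ (2 * n + 1)| ≤ κ := by
  obtain ⟨b, hb, hs⟩ := asin_coef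
  have hy2 : |y0 ^ 2| < 1 := by rw [abs_of_nonneg (by positivity)]; nlinarith
  have hlim := (hs (y0 ^ 2) hy2).tendsto_sum_nat
  obtain ⟨N, hN⟩ := (Metric.tendsto_atTop.mp hlim κ hκ)
  have hN := hN N le_rfl
  rw [dist_comm, Real.dist_eq] at hN
  have hder : ∀ y : ℝ, |y| < 1 → HasDerivAt (fun y => Real.arcsin y -
      ∑ n ∈ Finset.range N, b n / (2 * n + 1) * y ^ (2 * n + 1))
      (1 / Real.sqrt (1 - y ^ 2) - ∑ n ∈ Finset.range N, b n * (y ^ 2) ^ n) y := by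
    intro y hy
    rw [abs_lt] at hy
    refine (Real.hasDerivAt_arcsin (by linarith) (by linarith)).sub ?_
    refine HasDerivAt.fun_sum fun n _ => ?_
    have := (hasDerivAt_pow (2 * n + 1) y).const_mul (b n / (2 * n + 1))
    have h0 : (2 * (n : ℝ) + 1) ≠ 0 := by positivity
    have h3 : b n / (2 * n + 1) * (((2 * n + 1 : ℕ) : ℝ) * y ^ (2 * n + 1 - 1)) =
        b n * (y ^ 2) ^ n := by
      rw [← pow_mul]
      simp only [Nat.add_sub_cancel]
      push_cast
      field_simp
    rw [h3] at this
    exact this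
  have hdn : ∀ y : ℝ, |y| < 1 →
      0 ≤ 1 / Real.sqrt (1 - y ^ 2) - ∑ n ∈ Finset.range N, b n * (y ^ 2) ^ n := by
    intro y hy
    have : |y ^ 2| < 1 := by rw [abs_pow]; exact pow_lt_one₀ (abs_nonneg _) hy (by norm_num)
    have h := sum_le_hasSum (Finset.range N) (fun n _ => by
      have := hb n; positivity) (hs (y ^ 2) this)
    linarith
  refine ⟨N, fun n => b n / (2 * n + 1), fun n => by have := hb n; positivity, ?_, ?_⟩
  · have hmono : MonotoneOn (fun y => Real.arcsin y -
      ∑ n ∈ Finset.range N, b n / (2 * n + 1) * y ^ (2 * n + 1)) (Set.Icc 0 1) := by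
      refine monotoneOn_of_deriv_nonneg (convex_Icc 0 1) ?_ ?_ ?_
      · refine Continuous.continuousOn ?_
        have := Real.continuous_arcsin
        fun_prop
      · intro y hy
        rw [interior_Icc] at hy
        exact (hder y (by rw [abs_of_pos hy.1]; exact hy.2)).differentiableAt.differentiableWithinAt
      · intro y hy
        rw [interior_Icc] at hy
        have : |y| < 1 := by rw [abs_of_pos hy.1]; exact hy.2
        rw [(hder y this).deriv]
        exact hdn y this
    have := hmono (a := 0) (b := 1) (by simp) (by simp) (by norm_num)
    simp at this
    linarith
  · intro y hy
    have hle : ∀ z ∈ Set.Icc (-y0) y0, ‖1 / Real.sqrt (1 - z ^ 2) -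
        ∑ n ∈ Finset.range N, b n * (z ^ 2) ^ n‖ ≤ κ := by
      intro z hz
      have hz' : |z| ≤ y0 := abs_le.mpr hz
      have hz1 : |z| < 1 := by linarith
      have hzz : |z ^ 2| < 1 := by rw [abs_pow]; exact pow_lt_one₀ (abs_nonneg _) hz1 (by norm_num)
      rw [Real.norm_eq_abs, abs_of_nonneg (hdn z hz1)]
      refine le_trans ?_ ((le_abs_self _).trans hN.le)
      have s1 := (hs _ hzz).summable.sum_add_tsum_nat_add N
      have s2 := (hs _ hy2).summable.sum_add_tsum_nat_add N
      rw [(hs _ hzz).tsum_eq] at s1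
      rw [(hs _ hy2).tsum_eq] at s2
      have hzy : z ^ 2 ≤ y0 ^ 2 := sq_le_sq' hz.1 hz.2
      have : ∑' i, b (i + N) * (z ^ 2) ^ (i + N) ≤ ∑' i, b (i + N) * (y0 ^ 2) ^ (i + N) := by
        refine Summable.tsum_le_tsum (fun i => ?_) ((summable_nat_add_iff N).mpr (hs _ hzz).summable)
          ((summable_nat_add_iff N).mpr (hs _ hy2).summable)
        have := hb (i + N)
        gcongr
      linarith
    have := Convex.norm_image_sub_le_of_norm_hasDerivWithin_le (C := κ) (s := Set.Icc (-y0) y0)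
      (x := 0) (y := y)
      (fun z hz => (hder z (by have := abs_le.mpr hz; linarith)).hasDerivWithinAt) hle
      (convex_Icc _ _) ⟨by linarith, h0⟩ (abs_le.mp hy)
    simp at this
    refine this.trans ?_
    nlinarith
theorem stepA0 (r δ : ℝ) (hr : 0 < r) (hδ : 0 < δ) (a : ℕ → ℂ) (B : ℝ)
    (hs : Summable (fun k : ℕ => ‖a k‖ * (r + δ) ^ k))
    (hB : (∑' k : ℕ, ‖a k‖ * (r + δ) ^ k) ≤ B) (κ : ℝ) (hκ : 0 < κ) :
    ∃ g, Comb (Esin (Real.pi / (2 * (r + δ)))) B g ∧ ∀ x : ℝ, |x| ≤ r + δ / 2 →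
      ‖(∑' k : ℕ, a k * (x : ℂ) ^ k) - g x‖ ≤ κ := by
  set R := r + δ with hR
  have hR0 : 0 < R := by positivity
  set c := Real.pi / (2 * R) with hc
  have hpi := Real.pi_pos
  have hc0 : 0 < c := by positivity
  have hcR : c * R = Real.pi / 2 := by rw [hc]; field_simp
  -- the tail
  have hlim := hs.hasSum.tendsto_sum_nat
  obtain ⟨n, hn⟩ := Metric.tendsto_atTop.mp hlim (κ / 2) (by positivity)
  have hn := hn n le_rfl
  rw [dist_comm, Real.dist_eq] at hn
  have hsplit := hs.sum_add_tsum_nat_add n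
  have htail : ∑' i, ‖a (i + n)‖ * R ^ (i + n) ≤ κ / 2 := by
    have := (le_abs_self _).trans hn.le
    linarith
  -- arcsin approximation
  set K := ∑ k ∈ Finset.range n, ‖a k‖ * R ^ k * k with hK
  have hK0 : 0 ≤ K := Finset.sum_nonneg fun k _ => by positivity
  have hyb : c * (r + δ / 2) < Real.pi / 2 := by
    rw [← hcR]; gcongr; rw [hR]; linarith
  have hy0 : 0 ≤ Real.sin (c * (r + δ / 2)) :=
    Real.sin_nonneg_of_nonneg_of_le_pi (by positivity) (by linarith)
  have hy1 : Real.sin (c * (r + δ / 2)) < 1 := by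
    rw [← Real.sin_pi_div_two]
    exact Real.sin_lt_sin_of_lt_of_le_pi_div_two
      (by have : 0 ≤ c * (r + δ / 2) := by positivity
          linarith) le_rfl hyb
  obtain ⟨N, β, hβ, hβs, hβa⟩ := asin_poly _ hy0 hy1 (κ / (2 * (K + 1))) (by positivity)
  let v : ℝ → ℂ := fun x => ∑ m ∈ Finset.range N, ((2 / Real.pi * β m : ℝ) : ℂ) *
    ((Real.sin (c * x) ^ (2 * m + 1) : ℝ) : ℂ)
  have hv : Comb (Esin c) 1 v := by
    refine Comb.le ?_ (Comb.sum (M := fun m => 2 / Real.pi * β m) _ fun m _ => ?_)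
    · rw [← Finset.mul_sum, div_mul_eq_mul_div, div_le_one hpi]; linarith
    · have h := (Comb.of_mem (E := Esin c) ⟨2 * m + 1, rfl⟩).smul ((2 / Real.pi * β m : ℝ) : ℂ)
      refine Comb.le ?_ h
      have := hβ m
      rw [Complex.norm_real, Real.norm_of_nonneg (by positivity), mul_one]
  refine ⟨fun x => ∑ k ∈ Finset.range n, (a k * (R : ℂ) ^ k) * v x ^ k, ?_, ?_⟩
  · refine Comb.le ?_ (Comb.sum (M := fun k => ‖a k‖ * R ^ k) _ fun k _ => ?_)
    · exact (hs.sum_le_tsum _ fun k _ => by positivity).trans hB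
    · refine Comb.le ?_ ((Esin_pow hv k).smul (a k * (R : ℂ) ^ k))
      rw [norm_mul, norm_pow, Complex.norm_real, Real.norm_of_nonneg hR0.le, mul_one]
  · intro x hx
    have hxR : |x| ≤ R := by linarith
    have hnorm : ∀ k, ‖a k * (x : ℂ) ^ k‖ ≤ ‖a k‖ * R ^ k := by
      intro k
      rw [norm_mul, norm_pow, Complex.norm_real, Real.norm_eq_abs]
      gcongr
    have hsx : Summable (fun k => a k * (x : ℂ) ^ k) := Summable.of_norm_bounded hs hnorm
    have hsp := hsx.sum_add_tsum_nat_add n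
    have ht2 : ‖∑' i, a (i + n) * (x : ℂ) ^ (i + n)‖ ≤ κ / 2 := by
      refine le_trans (tsum_of_norm_bounded (((summable_nat_add_iff n).mpr hs).hasSum) ?_) htail
      intro i; exact hnorm (i + n)
    -- v x close to x / R
    have hcx : |c * x| ≤ c * (r + δ / 2) := by
      rw [abs_mul, abs_of_pos hc0]; gcongr
    have hcx' := abs_le.mp hcx
    have hsin : |Real.sin (c * x)| ≤ Real.sin (c * (r + δ / 2)) := by
      rw [abs_le]
      constructor
      · rw [← Real.sin_neg]
        exact Real.sin_le_sin_of_le_of_le_pi_div_two (by linarith) (by linarith) hcx'.1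
      · exact Real.sin_le_sin_of_le_of_le_pi_div_two (by linarith) (by linarith) hcx'.2
    have ha := hβa _ hsin
    rw [Real.arcsin_sin (by linarith) (by linarith)] at ha
    have hvx : ‖((x / R : ℝ) : ℂ) - v x‖ ≤ κ / (2 * (K + 1)) := by
      have : ((x / R : ℝ) : ℂ) - v x = ((2 / Real.pi * (c * x - ∑ n ∈ Finset.range N,
          β n * Real.sin (c * x) ^ (2 * n + 1)) : ℝ) : ℂ) := by
        have e1 : x / R = 2 / Real.pi * (c * x) := by rw [hc]; field_simp
        rw [e1, mul_sub, Complex.ofReal_sub]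
        simp only [v]
        congr 1
        rw [Finset.mul_sum]
        push_cast
        refine Finset.sum_congr rfl fun m _ => ?_
        ring
      rw [this, Complex.norm_real, Real.norm_eq_abs, abs_mul, abs_of_pos (by positivity)]
      refine le_trans (mul_le_of_le_one_left (abs_nonneg _) ?_) ha
      rw [div_le_one hpi]; exact Real.two_le_pi
    have hv1 : ‖v x‖ ≤ 1 := hv.bound x (Esin_norm x)
    have hx1 : ‖((x / R : ℝ) : ℂ)‖ ≤ 1 := by
      rw [Complex.norm_real, Real.norm_eq_abs, abs_div, abs_of_pos hR0, div_le_one hR0]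
      exact hxR
    have hpow : ∀ k : ℕ, ‖((x / R : ℝ) : ℂ) ^ k - v x ^ k‖ ≤ k * (κ / (2 * (K + 1))) := by
      intro k
      induction k with
      | zero => simp
      | succ k ih =>
        set u := ((x / R : ℝ) : ℂ)
        calc ‖u ^ (k + 1) - v x ^ (k + 1)‖ = ‖(u ^ k - v x ^ k) * u + v x ^ k * (u - v x)‖ := by
              ring_nf
          _ ≤ ‖u ^ k - v x ^ k‖ * ‖u‖ + ‖v x‖ ^ k * ‖u - v x‖ := by
              refine (norm_add_le _ _).trans ?_
              rw [norm_mul, norm_mul, norm_pow]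
          _ ≤ ‖u ^ k - v x ^ k‖ * 1 + 1 * ‖u - v x‖ := by
              gcongr
              exact pow_le_one₀ (norm_nonneg _) hv1
          _ ≤ _ := by push_cast; linarith
    have hmain : ‖∑ k ∈ Finset.range n, a k * (x : ℂ) ^ k -
        ∑ k ∈ Finset.range n, (a k * (R : ℂ) ^ k) * v x ^ k‖ ≤ κ / 2 := by
      rw [← Finset.sum_sub_distrib]
      calc _ ≤ ∑ k ∈ Finset.range n, ‖a k‖ * R ^ k * k * (κ / (2 * (K + 1))) := by
            refine (norm_sum_le _ _).trans (Finset.sum_le_sum fun k _ => ?_)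
            have e : a k * (x : ℂ) ^ k - (a k * (R : ℂ) ^ k) * v x ^ k =
                (a k * (R : ℂ) ^ k) * (((x / R : ℝ) : ℂ) ^ k - v x ^ k) := by
              have : (R : ℂ) ≠ 0 := by exact_mod_cast hR0.ne'
              push_cast
              rw [mul_sub, div_pow]
              field_simp
            rw [e, norm_mul, norm_mul, norm_pow, Complex.norm_real, Real.norm_of_nonneg hR0.le,
              mul_assoc (‖a k‖ * R ^ k)]
            gcongr
            exact hpow k
        _ = K * (κ / (2 * (K + 1))) := by rw [← Finset.sum_mul]
        _ ≤ κ / 2 := by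
            rw [← mul_div_assoc, div_le_div_iff₀ (by positivity) (by positivity)]
            nlinarith
    rw [← hsp, add_sub_right_comm]
    refine (norm_add_le _ _).trans ?_
    linarith

theorem stepA (r δ : ℝ) (hr : 0 < r) (hδ : 0 < δ) (a : ℕ → ℂ) (B : ℝ)
    (hs : Summable (fun k : ℕ => ‖a k‖ * (r + δ) ^ k))
    (hB0 : 0 < B)
    (hB : (∑' k : ℕ, ‖a k‖ * (r + δ) ^ k) ≤ B) (L : ℝ) (hL : 1 ≤ L) :
    ∃ g, Comb (Eexp (8 * L / δ)) B g ∧ ∀ x : ℝ, |x| ≤ r + δ / 2 →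
      ‖(∑' k : ℕ, a k * (x : ℂ) ^ k) - g x‖ ≤ 3 * B * Real.exp (-L) := by
  obtain ⟨g, hg, hga⟩ := stepA0 r δ hr hδ a B hs hB (B * Real.exp (-L)) (by positivity)
  set R := r + δ with hR
  have hR0 : 0 < R := by positivity
  have hδR : δ ≤ R := by linarith
  set c := Real.pi / (2 * R) with hc
  have hpi := Real.pi_pos
  have hc0 : 0 < c := by positivity
  have hcR : c * R = Real.pi / 2 := by rw [hc]; field_simp
  have hy : Real.sin (c * (r + δ / 2)) ≤ Real.exp (-(δ ^ 2 / (8 * R ^ 2))) := by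
    have e1 : c * (r + δ / 2) = Real.pi / 2 - c * (δ / 2) := by
      rw [← hcR, hR]; ring
    have h2 : c * (δ / 2) ≤ Real.pi / 2 := by rw [← hcR]; gcongr; linarith
    rw [e1, Real.sin_pi_div_two_sub]
    refine (Real.cos_le_one_sub_mul_cos_sq ?_).trans ?_
    · rw [abs_of_nonneg (by positivity)]; linarith
    · have e2 : 2 / Real.pi ^ 2 * (c * (δ / 2)) ^ 2 = δ ^ 2 / (8 * R ^ 2) := by
        rw [hc]; field_simp; norm_num
      rw [e2]
      have := Real.add_one_le_exp (-(δ ^ 2 / (8 * R ^ 2)))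
      linarith
  set S := 9 * L * R ^ 2 / δ ^ 2 with hS
  have happ := hg.approx (E' := Eexp (8 * L / δ)) (X := {x | |x| ≤ r + δ / 2})
    (K := 2 * Real.exp (-L)) ?_ (by positivity)
  · obtain ⟨k, hk, hka⟩ := happ
    refine ⟨k, hk, fun x hx => ?_⟩
    have h1 := hga x hx
    have h2 := hka x hx
    have := norm_sub_le_norm_sub_add_norm_sub (∑' k : ℕ, a k * (x : ℂ) ^ k) (g x) (k x)
    linarith
  · rintro _ ⟨l, rfl⟩
    by_cases hl : (l : ℝ) ≤ S
    · obtain ⟨k, hk, hka⟩ := sin_trunc c hc0.le l (5 * L * R / δ) (δ / (3 * R)) (by positivity)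
      have e1 : c * (5 * L * R / δ) ≤ 8 * L / δ := by
        have : c * (5 * L * R / δ) = (5 * Real.pi / 2) * L / δ := by rw [hc]; field_simp
        rw [this]
        have := Real.pi_lt_d2
        gcongr
        linarith
      refine ⟨k, ?_, fun x _ => (hka x).trans ?_⟩
      · have := hk.approx (E' := Eexp (8 * L / δ)) (X := Set.univ) (K := 0) (by
          rintro _ ⟨t, ht, rfl⟩
          exact ⟨_, Comb.of_mem ⟨t, ht.trans e1, rfl⟩, by simp⟩) le_rfl
        obtain ⟨k', hk', hka'⟩ := this
        have : k = k' := by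
          ext x
          have := hka' x trivial
          rw [mul_zero, norm_le_zero_iff, sub_eq_zero] at this
          exact this
        rwa [this]
      · gcongr
        have e2 : (δ / (3 * R)) ^ 2 * l / 2 ≤ (δ / (3 * R)) ^ 2 * S / 2 := by gcongr
        have e3 : (δ / (3 * R)) ^ 2 * S / 2 = L / 2 := by rw [hS]; field_simp; norm_num
        have e4 : -(δ / (3 * R)) * (5 * L * R / δ) = -(5 / 3 * L) := by field_simp
        rw [e4]; linarith
    · refine ⟨_, Comb.zero' zero_le_one, fun x hx => ?_⟩
      have hx : |x| ≤ r + δ / 2 := hx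
      have hcx : |c * x| ≤ c * (r + δ / 2) := by
        rw [abs_mul, abs_of_pos hc0]; gcongr
      have hcx' := abs_le.mp hcx
      have hyb : c * (r + δ / 2) < Real.pi / 2 := by
        rw [← hcR]; gcongr; rw [hR]; linarith
      have hsin : |Real.sin (c * x)| ≤ Real.sin (c * (r + δ / 2)) := by
        rw [abs_le]
        constructor
        · rw [← Real.sin_neg]
          exact Real.sin_le_sin_of_le_of_le_pi_div_two (by linarith) (by linarith) hcx'.1
        · exact Real.sin_le_sin_of_le_of_le_pi_div_two (by linarith) (by linarith) hcx'.2
      rw [sub_zero, Complex.norm_real, Real.norm_eq_abs, abs_pow]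
      calc |Real.sin (c * x)| ^ l ≤ Real.exp (-(δ ^ 2 / (8 * R ^ 2))) ^ l := by
            gcongr
            exact hsin.trans hy
        _ = Real.exp (-(δ ^ 2 / (8 * R ^ 2) * l)) := by rw [← Real.exp_nat_mul]; ring_nf
        _ ≤ Real.exp (-L) := by
            gcongr
            push Not at hl
            have : δ ^ 2 / (8 * R ^ 2) * S ≤ δ ^ 2 / (8 * R ^ 2) * l := by gcongr
            have e : δ ^ 2 / (8 * R ^ 2) * S = 9 / 8 * L := by rw [hS]; field_simp
            linarith
        _ ≤ 2 * Real.exp (-L) := by linarith [Real.exp_pos (-L)]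
theorem tail_int (S : ℕ) (b : ℝ) (h0 : 0 ≤ b) (h1 : b ≤ Real.pi) :
    ∫ u in b..Real.pi, Real.cos (u / 2) ^ (2 * S) ≤
      Real.cos (b / 2) ^ (2 * S) * ((∫ u in (-Real.pi)..Real.pi, Real.cos (u / 2) ^ (2 * S)) / 2) := by
  have hpi := Real.pi_pos
  have hcont : Continuous (fun u : ℝ => Real.cos (u / 2) ^ (2 * S)) := by fun_prop
  have hnn : ∀ u : ℝ, 0 ≤ Real.cos (u / 2) ^ (2 * S) := fun u => by rw [pow_mul]; positivity
  have hhalf : ∫ u in (-Real.pi)..Real.pi, Real.cos (u / 2) ^ (2 * S) =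
      2 * ∫ u in (0 : ℝ)..Real.pi, Real.cos (u / 2) ^ (2 * S) := by
    rw [← intervalIntegral.integral_add_adjacent_intervals (b := 0)
      (hcont.intervalIntegrable _ _) (hcont.intervalIntegrable _ _)]
    have := intervalIntegral.integral_comp_neg (a := 0) (b := Real.pi)
      (fun u : ℝ => Real.cos (u / 2) ^ (2 * S))
    simp only [neg_div, Real.cos_neg, neg_zero] at this
    rw [this]; ring
  rw [hhalf, mul_div_cancel_left₀ _ (by norm_num : (2 : ℝ) ≠ 0)]
  have hsub := intervalIntegral.integral_comp_add_right (a := 0) (b := Real.pi - b)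
      (fun u : ℝ => Real.cos (u / 2) ^ (2 * S)) b
  rw [zero_add, sub_add_cancel] at hsub
  rw [← hsub]
  calc ∫ v in (0 : ℝ)..(Real.pi - b), Real.cos ((v + b) / 2) ^ (2 * S)
      ≤ ∫ v in (0 : ℝ)..(Real.pi - b), Real.cos (b / 2) ^ (2 * S) * Real.cos (v / 2) ^ (2 * S) := by
        refine intervalIntegral.integral_mono_on (by linarith) ?_ ?_ ?_
        · exact Continuous.intervalIntegrable (by fun_prop) _ _
        · exact Continuous.intervalIntegrable (by fun_prop) _ _
        · intro v hv
          have hv0 := hv.1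
          have hv1 := hv.2
          rw [← mul_pow]
          have c1 : 0 ≤ Real.cos ((v + b) / 2) :=
            Real.cos_nonneg_of_mem_Icc ⟨by linarith, by linarith⟩
          gcongr
          rw [add_div, Real.cos_add]
          have s1 := Real.sin_nonneg_of_nonneg_of_le_pi (x := v / 2) (by linarith) (by linarith)
          have s2 := Real.sin_nonneg_of_nonneg_of_le_pi (x := b / 2) (by linarith) (by linarith)
          nlinarith
    _ = Real.cos (b / 2) ^ (2 * S) * ∫ v in (0 : ℝ)..(Real.pi - b), Real.cos (v / 2) ^ (2 * S) := by
        rw [intervalIntegral.integral_const_mul]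
    _ ≤ _ := by
        refine mul_le_mul_of_nonneg_left ?_ (hnn b)
        exact intervalIntegral.integral_mono_interval le_rfl (by linarith) (by linarith)
          (Filter.Eventually.of_forall hnn) (hcont.intervalIntegrable _ _)

theorem int_lower (S : ℕ) (hS : 1 ≤ S) :
    3 / 2 / Real.sqrt S ≤ ∫ u in (-Real.pi)..Real.pi, Real.cos (u / 2) ^ (2 * S) := by
  have hpi := Real.pi_gt_three
  have hcont : Continuous (fun u : ℝ => Real.cos (u / 2) ^ (2 * S)) := by fun_prop
  have hnn : ∀ u : ℝ, 0 ≤ Real.cos (u / 2) ^ (2 * S) := fun u => by rw [pow_mul]; positivity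
  have hS' : (1 : ℝ) ≤ S := by exact_mod_cast hS
  have hq1 : 1 ≤ Real.sqrt S := by rw [Real.one_le_sqrt]; exact hS'
  set q := 1 / Real.sqrt S with hq
  have hq0 : 0 < q := by positivity
  have hqle : q ≤ 1 := by rw [hq, div_le_one (by positivity)]; exact hq1
  have hqq : q ^ 2 * S = 1 := by
    rw [hq, div_pow, Real.sq_sqrt (by positivity)]; field_simp
  calc 3 / 2 / Real.sqrt S = ∫ u in (-q)..q, (3 / 4 : ℝ) := by
        rw [intervalIntegral.integral_const, smul_eq_mul, hq]; ring
    _ ≤ ∫ u in (-q)..q, Real.cos (u / 2) ^ (2 * S) := by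
        refine intervalIntegral.integral_mono_on (by linarith) (by simp)
          (hcont.intervalIntegrable _ _) ?_
        intro u hu
        have hu2 : u ^ 2 ≤ q ^ 2 := sq_le_sq' hu.1 hu.2
        have hu1 : u ^ 2 ≤ 1 := hu2.trans (pow_le_one₀ hq0.le hqle)
        have h1 := Real.one_sub_sq_div_two_le_cos (x := u / 2)
        have h2 := one_add_mul_le_pow (a := -(u ^ 2 / 8)) (by linarith) (2 * S)
        calc (3 / 4 : ℝ) ≤ 1 + (2 * S : ℕ) * (-(u ^ 2 / 8)) := by
              push_cast
              nlinarith
          _ ≤ (1 + -(u ^ 2 / 8)) ^ (2 * S) := h2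
          _ ≤ _ := by
              have : 0 ≤ 1 + -(u ^ 2 / 8) := by linarith
              gcongr
              linarith
    _ ≤ _ := by
        exact intervalIntegral.integral_mono_interval (by linarith) (by linarith) (by linarith)
          (Filter.Eventually.of_forall hnn) (hcont.intervalIntegrable _ _)

theorem window_real (S : ℕ) (r δ η : ℝ) (hr : 0 < r) (hr1 : r ≤ 1) (hδ : 0 < δ) (hδr : δ ≤ r)
    (hη : Real.cos (δ / 8) ^ (2 * S) ≤ η) (I : ℝ) (hI0 : 0 < I)
    (hI : I = ∫ u in (-Real.pi)..Real.pi, Real.cos (u / 2) ^ (2 * S)) (W : ℝ → ℝ)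
    (hW : W = fun x => 1 / I * ∫ t in (-(r + δ / 4))..(r + δ / 4), Real.cos ((x - t) / 2) ^ (2 * S)) :
    ∀ x : ℝ, |x| ≤ 1 → 0 ≤ W x ∧ W x ≤ 1 ∧ (|x| ≤ r → 1 - η ≤ W x) ∧
      (r + δ / 2 ≤ |x| → W x ≤ η) := by
  have hpi := Real.pi_gt_three
  have hcont : Continuous (fun u : ℝ => Real.cos (u / 2) ^ (2 * S)) := by fun_prop
  have hii := fun a b => hcont.intervalIntegrable (μ := MeasureTheory.volume) a b
  have hnn : ∀ u : ℝ, 0 ≤ Real.cos (u / 2) ^ (2 * S) := fun u => by rw [pow_mul]; positivity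
  have hη0 : 0 ≤ η := le_trans (by rw [pow_mul]; positivity) hη
  have htail : ∫ u in (δ / 4)..Real.pi, Real.cos (u / 2) ^ (2 * S) ≤ η * (I / 2) := by
    have := tail_int S (δ / 4) (by linarith) (by linarith)
    rw [← hI, show δ / 4 / 2 = δ / 8 by ring] at this
    refine this.trans ?_
    gcongr
  have htail' : ∫ u in (-Real.pi)..(-(δ / 4)), Real.cos (u / 2) ^ (2 * S) ≤ η * (I / 2) := by
    have := intervalIntegral.integral_comp_neg (a := δ / 4) (b := Real.pi)
      (fun u : ℝ => Real.cos (u / 2) ^ (2 * S))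
    simp only [neg_div, Real.cos_neg] at this
    rw [← this]; exact htail
  have hmono : ∀ a b c d : ℝ, c ≤ a → a ≤ b → b ≤ d →
      ∫ u in a..b, Real.cos (u / 2) ^ (2 * S) ≤ ∫ u in c..d, Real.cos (u / 2) ^ (2 * S) :=
    fun a b c d h1 h2 h3 => intervalIntegral.integral_mono_interval h1 h2 h3
      (Filter.Eventually.of_forall hnn) (hii _ _)
  intro x hx
  have hx' := abs_le.mp hx
  set r' := r + δ / 4 with hr'
  have hWx : I * W x = ∫ u in (x - r')..(x + r'), Real.cos (u / 2) ^ (2 * S) := by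
    have := intervalIntegral.integral_comp_sub_left (a := -r') (b := r')
      (fun u : ℝ => Real.cos (u / 2) ^ (2 * S)) x
    rw [sub_neg_eq_add] at this
    rw [← this, hW]
    field_simp
  have hWnn : 0 ≤ I * W x := by
    rw [hWx]
    exact intervalIntegral.integral_nonneg (by linarith) fun u _ => hnn u
  refine ⟨?_, ?_, ?_, ?_⟩
  · exact nonneg_of_mul_nonneg_right hWnn hI0
  · have : I * W x ≤ I * 1 := by
      rw [hWx, mul_one, hI]
      exact hmono _ _ _ _ (by linarith) (by linarith) (by linarith)
    exact le_of_mul_le_mul_left this hI0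
  · intro hxr
    have hxr' := abs_le.mp hxr
    have : I * (1 - η) ≤ I * W x := by
      rw [hWx]
      have h1 := intervalIntegral.integral_add_adjacent_intervals (hii (-Real.pi) (x - r'))
        (hii (x - r') (x + r'))
      have h2 := intervalIntegral.integral_add_adjacent_intervals (hii (-Real.pi) (x + r'))
        (hii (x + r') Real.pi)
      have h3 := hmono (-Real.pi) (x - r') (-Real.pi) (-(δ / 4)) le_rfl (by linarith) (by linarith)
      have h4 := hmono (x + r') Real.pi (δ / 4) Real.pi (by linarith) (by linarith) le_rfl
      rw [← hI] at h2
      linarith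
    exact le_of_mul_le_mul_left this hI0
  · intro hxr
    have : I * W x ≤ I * η := by
      rw [hWx]
      have h0 : η * (I / 2) ≤ I * η := by nlinarith
      rcases abs_cases x with ⟨h, _⟩ | ⟨h, _⟩
      · rw [h] at hxr
        exact (hmono _ _ (δ / 4) Real.pi (by linarith) (by linarith) (by linarith)).trans
          (htail.trans h0)
      · rw [h] at hxr
        exact (hmono _ _ (-Real.pi) (-(δ / 4)) (by linarith) (by linarith) (by linarith)).trans
          (htail'.trans h0)
    exact le_of_mul_le_mul_left this hI0

theorem window_fourier (S : ℕ) (r' d lam I : ℝ) (hr : 0 < r') (hd : 0 < d) (hl : 0 ≤ lam)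
    (hI0 : 0 < I) (W : ℝ → ℝ)
    (hW : W = fun x => 1 / I * ∫ t in (-r')..r', Real.cos ((x - t) / 2) ^ (2 * S)) :
    ∃ w, Comb (Eexp d) (1 / I * (2 * r')) w ∧ ∀ x : ℝ,
      ‖(W x : ℂ) - w x‖ ≤ 1 / I * (2 / d) * (2 * Real.exp (-lam * (2 * d) + lam ^ 2 * S)) := by
  classical
  let J : ℕ → ℂ := fun m => ∫ t in (-r')..r', Complex.exp (-(Complex.I * ((m - S : ℝ) : ℂ)) * t)
  let p : ℕ → ℝ := fun m => ((2 * S).choose m : ℝ) / 2 ^ (2 * S)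
  have hp : ∀ m, 0 ≤ p m := fun m => by positivity
  let co : ℕ → ℂ := fun m => ((1 / I * p m : ℝ) : ℂ) * J m
  have hJ1 : ∀ m, ‖J m‖ ≤ 2 * r' := by
    intro m
    have := intervalIntegral.norm_integral_le_of_norm_le_const (a := -r') (b := r') (C := 1)
      (f := fun t : ℝ => Complex.exp (-(Complex.I * ((m - S : ℝ) : ℂ)) * t)) (by
        intro t _
        rw [Complex.norm_exp]; simp)
    rw [sub_neg_eq_add, abs_of_pos (by linarith)] at this
    simp only [J]
    linarith
  have hJ2 : ∀ m : ℕ, d < |(m : ℝ) - S| → ‖J m‖ ≤ 2 / d := by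
    intro m hm
    have h0 : ((m - S : ℝ) : ℂ) ≠ 0 := by
      intro h
      have : (m : ℝ) - S = 0 := by exact_mod_cast h
      rw [this, abs_zero] at hm; linarith
    have hne : -(Complex.I * ((m - S : ℝ) : ℂ)) ≠ 0 :=
      neg_ne_zero.mpr (mul_ne_zero Complex.I_ne_zero h0)
    simp only [J]
    rw [integral_exp_mul_complex hne, norm_div, norm_neg, norm_mul, Complex.norm_I, one_mul,
      Complex.norm_real, Real.norm_eq_abs]
    have : ∀ t : ℝ, ‖Complex.exp (-(Complex.I * ((m - S : ℝ) : ℂ)) * t)‖ = 1 := by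
      intro t; rw [Complex.norm_exp]; simp
    have h2 := norm_sub_le (Complex.exp (-(Complex.I * ((m - S : ℝ) : ℂ)) * (r' : ℝ)))
      (Complex.exp (-(Complex.I * ((m - S : ℝ) : ℂ)) * ((-r' : ℝ) : ℂ)))
    rw [this, this] at h2
    gcongr
    linarith
  have hcos : ∀ u : ℝ, ((Real.cos (u / 2) ^ (2 * S) : ℝ) : ℂ) =
      ∑ m ∈ Finset.range (2 * S + 1), (p m : ℂ) *
        Complex.exp (Complex.I * ((m - S : ℝ) : ℂ) * u) := by
    intro u
    rw [Complex.ofReal_pow, Complex.ofReal_cos, Complex.cos, div_pow, add_pow, Finset.sum_div]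
    refine Finset.sum_congr rfl fun m hm => ?_
    have hm' : m ≤ 2 * S := by simpa [Nat.lt_succ_iff] using hm
    rw [← Complex.exp_nat_mul, ← Complex.exp_nat_mul, ← Complex.exp_add, Nat.cast_sub hm']
    simp only [p]
    have : (m : ℂ) * (((u / 2 : ℝ) : ℂ) * Complex.I) + (((2 * S : ℕ) : ℂ) - m) *
        (-((u / 2 : ℝ) : ℂ) * Complex.I) = Complex.I * ((m - S : ℝ) : ℂ) * u := by
      push_cast; ring
    rw [this]
    push_cast; ring
  have hWs : ∀ x : ℝ, (W x : ℂ) = ∑ m ∈ Finset.range (2 * S + 1),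
      co m * Complex.exp (Complex.I * (((m - S) * x : ℝ) : ℂ)) := by
    intro x
    rw [hW]
    simp only
    rw [Complex.ofReal_mul, ← intervalIntegral.integral_ofReal]
    simp_rw [hcos]
    rw [intervalIntegral.integral_finsetSum]
    · rw [Finset.mul_sum]
      refine Finset.sum_congr rfl fun m _ => ?_
      have : ∀ t : ℝ, (p m : ℂ) * Complex.exp (Complex.I * ((m - S : ℝ) : ℂ) * ((x - t : ℝ) : ℂ)) =
          ((p m : ℂ) * Complex.exp (Complex.I * (((m - S) * x : ℝ) : ℂ))) *
            Complex.exp (-(Complex.I * ((m - S : ℝ) : ℂ)) * t) := by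
        intro t
        rw [mul_assoc (p m : ℂ), ← Complex.exp_add]
        congr 2
        push_cast; ring
      simp_rw [this]
      rw [intervalIntegral.integral_const_mul]
      simp only [co, J]
      push_cast
      ring
    · intro m _
      exact Continuous.intervalIntegrable (by fun_prop) _ _
  have hnco : ∀ m, ‖co m‖ = 1 / I * p m * ‖J m‖ := by
    intro m
    simp only [co]
    rw [norm_mul, Complex.norm_real, Real.norm_of_nonneg (mul_nonneg (by positivity) (hp m))]
  refine ⟨fun x => ∑ m ∈ (Finset.range (2 * S + 1)).filter
      (fun m : ℕ => ¬ 2 * d < |2 * (m : ℝ) - (2 * S : ℕ)|),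
      co m * Complex.exp (Complex.I * (((m - S) * x : ℝ) : ℂ)), ?_, fun x => ?_⟩
  · refine Comb.le ?_ (Comb.sum (M := fun m => ‖co m‖) _ fun m hm => ?_)
    · calc _ ≤ ∑ m ∈ Finset.range (2 * S + 1), ‖co m‖ := by
            refine Finset.sum_le_sum_of_subset_of_nonneg (Finset.filter_subset _ _) ?_
            intros; positivity
        _ ≤ ∑ m ∈ Finset.range (2 * S + 1), 1 / I * (2 * r') * p m := by
            refine Finset.sum_le_sum fun m _ => ?_
            rw [hnco, mul_right_comm]
            have := hp m
            gcongr
            exact hJ1 m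
        _ = 1 / I * (2 * r') := by
            rw [← Finset.mul_sum, binom_total, mul_one]
    · have := (Comb.of_mem (E := Eexp d) (e := fun x : ℝ =>
        Complex.exp (Complex.I * (((m - S) * x : ℝ) : ℂ))) ⟨_, ?_, rfl⟩).smul (co m)
      · simpa using this
      · have h := (Finset.mem_filter.mp hm).2
        push Not at h
        push_cast at h
        rw [← mul_sub, abs_mul, abs_of_pos (by norm_num : (0:ℝ) < 2)] at h
        linarith
  · rw [hWs, ← Finset.sum_filter_add_sum_filter_not _
      (fun m : ℕ => 2 * d < |2 * (m : ℝ) - (2 * S : ℕ)|), add_sub_cancel_right]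
    refine (norm_sum_le _ _).trans ?_
    calc _ ≤ ∑ m ∈ (Finset.range (2 * S + 1)).filter
              (fun m : ℕ => 2 * d < |2 * (m : ℝ) - (2 * S : ℕ)|), 1 / I * (2 / d) * p m := by
          refine Finset.sum_le_sum fun m hm => ?_
          have h := (Finset.mem_filter.mp hm).2
          push_cast at h
          rw [← mul_sub, abs_mul, abs_of_pos (by norm_num : (0:ℝ) < 2)] at h
          rw [norm_mul, hnco, mul_comm Complex.I, Complex.norm_exp_ofReal_mul_I, mul_one,
            mul_right_comm]
          have := hp m
          gcongr
          exact hJ2 m (by linarith)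
      _ ≤ _ := by
          rw [← Finset.mul_sum]
          gcongr
          refine (binom_tail (2 * S) (2 * d) lam hl).trans (le_of_eq ?_)
          congr 2
          push_cast; ring

theorem stepB (r δ L : ℝ) (hr : 0 < r) (hr1 : r ≤ 1) (hδ : 0 < δ) (hδr : δ ≤ r) (hL : 1 ≤ L) :
    ∃ w, Comb (Eexp (40 * L / δ)) (30 * L / δ) w ∧ ∀ x : ℝ, |x| ≤ 1 →
      ‖w x‖ ≤ 1 + Real.exp (-L) ∧ (|x| ≤ r → ‖1 - w x‖ ≤ 2 * Real.exp (-L)) ∧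
      (r + δ / 2 ≤ |x| → ‖w x‖ ≤ 2 * Real.exp (-L)) := by
  have hδ1 : δ ≤ 1 := hδr.trans hr1
  have hδ2 : δ ^ 2 ≤ 1 := pow_le_one₀ hδ.le hδ1
  have hpi := Real.pi_pos
  set S := ⌈160 * L / δ ^ 2⌉₊ with hS
  have hS1 : 160 * L / δ ^ 2 ≤ S := Nat.le_ceil _
  have hLd : 1 ≤ L / δ ^ 2 := by rw [le_div_iff₀ (by positivity)]; linarith
  have hS2 : (S : ℝ) ≤ 161 * L / δ ^ 2 := by
    have := (Nat.ceil_lt_add_one (a := 160 * L / δ ^ 2) (by positivity)).le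
    rw [← hS] at this
    calc (S : ℝ) ≤ 160 * L / δ ^ 2 + 1 := this
      _ ≤ 160 * L / δ ^ 2 + L / δ ^ 2 := by gcongr
      _ = _ := by ring
  have hSpos : (1 : ℝ) ≤ S := by
    have : 160 * L / δ ^ 2 = 160 * (L / δ ^ 2) := by ring
    linarith
  have hsq : Real.sqrt S ≤ 13 * L / δ := by
    rw [Real.sqrt_le_left (by positivity)]
    refine hS2.trans ?_
    rw [div_pow]
    gcongr
    nlinarith
  set I := ∫ u in (-Real.pi)..Real.pi, Real.cos (u / 2) ^ (2 * S) with hI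
  have hIl := int_lower S (by exact_mod_cast hSpos)
  rw [← hI] at hIl
  have hI0 : 0 < I := lt_of_lt_of_le (by positivity) hIl
  have hIinv : 1 / I ≤ 9 * L / δ := by
    have h1 : 1 / I ≤ 1 / (3 / 2 / Real.sqrt S) := by gcongr
    have h2 : 1 / (3 / 2 / Real.sqrt S) = 2 / 3 * Real.sqrt S := by field_simp
    have h3 : 2 / 3 * (13 * L / δ) ≤ 9 * L / δ := by
      have e : 2 / 3 * (13 * L / δ) = (26 / 3 * L) / δ := by ring
      rw [e]
      apply div_le_div_of_nonneg_right _ hδ.le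
      linarith
    rw [h2] at h1
    linarith
  set W : ℝ → ℝ := fun x => 1 / I * ∫ t in (-(r + δ / 4))..(r + δ / 4),
    Real.cos ((x - t) / 2) ^ (2 * S) with hW
  have hη : Real.cos (δ / 8) ^ (2 * S) ≤ Real.exp (-L) := by
    have hc : Real.cos (δ / 8) ≤ Real.exp (-(δ ^ 2 / 320)) := by
      refine (Real.cos_le_one_sub_mul_cos_sq ?_).trans ?_
      · rw [abs_of_pos (by positivity)]; linarith [Real.pi_gt_three]
      · have h10 : Real.pi ^ 2 ≤ 10 := by
          have := Real.pi_lt_d2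
          nlinarith
        have : δ ^ 2 / 320 ≤ 2 / Real.pi ^ 2 * (δ / 8) ^ 2 := by
          calc δ ^ 2 / 320 = 2 / 10 * (δ / 8) ^ 2 := by ring
            _ ≤ _ := by gcongr
        have := Real.add_one_le_exp (-(δ ^ 2 / 320))
        linarith
    have hc0 : 0 ≤ Real.cos (δ / 8) :=
      Real.cos_nonneg_of_mem_Icc ⟨by linarith [Real.pi_gt_three], by linarith [Real.pi_gt_three]⟩
    calc Real.cos (δ / 8) ^ (2 * S) ≤ Real.exp (-(δ ^ 2 / 320)) ^ (2 * S) := by gcongr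
      _ = Real.exp (-(δ ^ 2 / 160 * S)) := by
          rw [← Real.exp_nat_mul]; push_cast; ring_nf
      _ ≤ Real.exp (-L) := by
          gcongr
          calc L = δ ^ 2 / 160 * (160 * L / δ ^ 2) := by field_simp
            _ ≤ _ := by gcongr
  have hreal := window_real S r δ _ hr hr1 hδ hδr hη I hI0 hI W hW
  obtain ⟨w, hw, hwa⟩ := window_fourier S (r + δ / 4) (40 * L / δ) (δ / 20) I (by positivity)
    (by positivity) (by positivity) hI0 W hW
  have herr : ∀ x, ‖(W x : ℂ) - w x‖ ≤ Real.exp (-L) := by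
    intro x
    refine (hwa x).trans ?_
    have h1 : Real.exp (-(δ / 20) * (2 * (40 * L / δ)) + (δ / 20) ^ 2 * S) ≤ Real.exp (-L) := by
      gcongr
      have e1 : -(δ / 20) * (2 * (40 * L / δ)) = -(4 * L) := by field_simp; norm_num
      have e2 : (δ / 20) ^ 2 * S ≤ (δ / 20) ^ 2 * (161 * L / δ ^ 2) := by gcongr
      have e3 : (δ / 20) ^ 2 * (161 * L / δ ^ 2) = 161 / 400 * L := by field_simp; norm_num
      rw [e1]; linarith
    calc _ ≤ 9 * L / δ * (2 / (40 * L / δ)) * (2 * Real.exp (-L)) := by gcongr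
      _ = 9 / 10 * Real.exp (-L) := by field_simp; norm_num
      _ ≤ _ := by linarith [Real.exp_pos (-L)]
  refine ⟨w, Comb.le ?_ hw, fun x hx => ?_⟩
  · calc 1 / I * (2 * (r + δ / 4)) ≤ 9 * L / δ * (10 / 3) := by gcongr; linarith
      _ = _ := by ring
  · obtain ⟨h0, h1, h2, h3⟩ := hreal x hx
    have he := herr x
    have hn : ‖(W x : ℂ)‖ = W x := by rw [Complex.norm_real, Real.norm_of_nonneg h0]
    have hle : ‖w x‖ ≤ W x + Real.exp (-L) := by
      have := norm_le_norm_add_norm_sub (W x : ℂ) (w x)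
      rw [hn] at this
      linarith
    refine ⟨by linarith, fun h => ?_, fun h => ?_⟩
    · have h4 := h2 h
      have : ‖(1 : ℂ) - W x‖ ≤ Real.exp (-L) := by
        rw [← Complex.ofReal_one, ← Complex.ofReal_sub, Complex.norm_real,
          Real.norm_of_nonneg (by linarith)]
        linarith
      have := norm_sub_le_norm_sub_add_norm_sub (1 : ℂ) (W x : ℂ) (w x)
      linarith
    · have := h3 h
      linarith

/-- (Piecewise polynomial approximations based on a local Taylor series.)
There is a universal constant `C > 0` such that: for `r ∈ (0,1]`, `δ ∈ (0,r]`, and a power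
series `f(x) = Σ aₖ xᵏ` converging absolutely on `[−r−δ, r+δ]`, any `B > 0` with
`B ≥ Σ |aₖ|(r+δ)ᵏ`, and any `ε ∈ (0, 3B/2)`, there exists a complex polynomial `P` of
degree at most `C·(1/δ)·log(12B/ε)` with `sup_{[−r,r]} |f − P| ≤ ε` and
`sup_{[−1,1]} |P| ≤ ε + sup_{[−r−δ/2, r+δ/2]} |f|`. -/
theorem poly_approx_local_taylor :
    ∃ C : ℝ, 0 < C ∧
      ∀ (r δ : ℝ), 0 < r → r ≤ 1 → 0 < δ → δ ≤ r →
      ∀ (a : ℕ → ℂ) (B ε : ℝ),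
        Summable (fun k : ℕ => ‖a k‖ * (r + δ) ^ k) →
        0 < B → (∑' k : ℕ, ‖a k‖ * (r + δ) ^ k) ≤ B →
        0 < ε → ε < 3 * B / 2 →
        ∃ P : Polynomial ℂ,
          (P.natDegree : ℝ) ≤ C * (1 / δ) * Real.log (12 * B / ε) ∧
          (∀ x : ℝ, x ∈ Set.Icc (-r) r →
            ‖(∑' k : ℕ, a k * (x : ℂ) ^ k) - P.eval (x : ℂ)‖ ≤ ε) ∧
          (∀ x : ℝ, x ∈ Set.Icc (-1 : ℝ) 1 →
            ‖P.eval (x : ℂ)‖ ≤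
              ε + ⨆ y : Set.Icc (-r - δ / 2) (r + δ / 2),
                ‖∑' k : ℕ, a k * ((y : ℝ) : ℂ) ^ k‖) := by
  refine ⟨385, by norm_num, ?_⟩
  intro r δ hr hr1 hδ hδr a B ε hs hB0 hB hε hεB
  have hδ1 : δ ≤ 1 := hδr.trans hr1
  set L := Real.log (12 * B / ε) with hLdef
  have hq : 8 ≤ 12 * B / ε := by rw [le_div_iff₀ hε]; linarith
  have hL : 1 ≤ L := by
    rw [hLdef, Real.le_log_iff_exp_le (by linarith)]
    linarith [Real.exp_one_lt_d9]
  have hexp : Real.exp (-L) = ε / (12 * B) := by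
    rw [Real.exp_neg, hLdef, Real.exp_log (by linarith), inv_div]
  have hBe : B * Real.exp (-L) = ε / 12 := by rw [hexp]; field_simp
  set η := Real.exp (-L) with hηdef
  have hη0 : 0 < η := Real.exp_pos _
  obtain ⟨g, hg, hga⟩ := stepA r δ hr hδ a B hs hB0 hB L hL
  obtain ⟨w, hw, hwa⟩ := stepB r δ L hr hr1 hδ hδr hL
  have hG := Comb.mul hg hw Eexp_mul
  have hy1 : L ≤ L / δ := by rw [le_div_iff₀ hδ]; nlinarith
  set y := L / δ with hy
  set n := ⌈384 * y⌉₊ with hn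
  have hn1 : 384 * y ≤ n := Nat.le_ceil _
  have hn2 : (n : ℝ) ≤ 385 * y := by
    have := (Nat.ceil_lt_add_one (a := 384 * y) (by linarith)).le
    rw [← hn] at this
    linarith
  have hτ : 8 * (8 * L / δ + 40 * L / δ) ≤ n := by
    have : 8 * (8 * L / δ + 40 * L / δ) = 384 * y := by rw [hy]; ring
    linarith
  obtain ⟨P, hP, hPa⟩ := Comb.approx_poly (X := Set.Icc (-1) 1) hG (exp_poly _ n hτ) (by positivity)
  have hGP : ∀ x : ℝ, x ∈ Set.Icc (-1 : ℝ) 1 → ‖g x * w x - P.eval (x : ℂ)‖ ≤ B * η := by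
    intro x hx
    refine (hPa x hx).trans ?_
    have e1 : Real.exp (-(n : ℝ)) ≤ Real.exp (-(100 * y)) * η := by
      rw [hηdef, ← Real.exp_add]
      gcongr
      linarith
    have e2 : 100 * y * Real.exp (-(100 * y)) ≤ 1 := by
      rw [Real.exp_neg, ← div_eq_mul_inv, div_le_one (Real.exp_pos _)]
      linarith [Real.add_one_le_exp (100 * y)]
    have hy0 : 0 ≤ y := by linarith
    calc B * (30 * L / δ) * (2 * Real.exp (-(n : ℝ)))
        = B * (60 * y * Real.exp (-(n : ℝ))) := by rw [hy]; ring
      _ ≤ B * (60 * y * (Real.exp (-(100 * y)) * η)) := by gcongr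
      _ = B * (60 / 100 * (100 * y * Real.exp (-(100 * y))) * η) := by ring
      _ ≤ B * (60 / 100 * 1 * η) := by gcongr
      _ ≤ B * η := by nlinarith [mul_pos hB0 hη0]
  have hgB : ∀ x, ‖g x‖ ≤ B := fun x => hg.bound x (Eexp_norm x)
  have hsum : ∀ x : ℝ, |x| ≤ r + δ → ‖∑' k : ℕ, a k * (x : ℂ) ^ k‖ ≤ B := by
    intro x hx
    refine (tsum_of_norm_bounded hs.hasSum fun k => ?_).trans hB
    rw [norm_mul, norm_pow, Complex.norm_real, Real.norm_eq_abs]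
    gcongr
  refine ⟨P, ?_, ?_, ?_⟩
  · calc (P.natDegree : ℝ) ≤ n := by exact_mod_cast hP
      _ ≤ 385 * y := hn2
      _ = _ := by rw [hy]; ring
  · intro x hx
    have hxr : |x| ≤ r := abs_le.mpr hx
    have hx1 : |x| ≤ 1 := hxr.trans hr1
    have h1 := hga x (by linarith)
    have h2 := (hwa x hx1).2.1 hxr
    have h3 := hGP x (abs_le.mp hx1)
    have h4 : ‖g x * (1 - w x)‖ ≤ B * (2 * η) := by
      rw [norm_mul]
      exact mul_le_mul (hgB x) h2 (norm_nonneg _) hB0.le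
    have e : (∑' k : ℕ, a k * (x : ℂ) ^ k) - P.eval (x : ℂ) =
        ((∑' k : ℕ, a k * (x : ℂ) ^ k) - g x) + g x * (1 - w x) +
          (g x * w x - P.eval (x : ℂ)) := by ring
    rw [e]
    refine (norm_add₃_le).trans ?_
    linarith
  · intro x hx
    have hx1 : |x| ≤ 1 := abs_le.mpr hx
    have h3 := hGP x hx
    have h5 : ‖P.eval (x : ℂ)‖ ≤ ‖g x‖ * ‖w x‖ + B * η := by
      have := norm_le_norm_add_norm_sub (g x * w x) (P.eval (x : ℂ))
      rw [norm_mul] at this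
      linarith
    rcases le_total |x| (r + δ / 2) with hxd | hxd
    · have h1 := hga x hxd
      have h2 := (hwa x hx1).1
      have hb : BddAbove (Set.range fun y : Set.Icc (-r - δ / 2) (r + δ / 2) =>
          ‖∑' k : ℕ, a k * ((y : ℝ) : ℂ) ^ k‖) := by
        refine ⟨B, ?_⟩
        rintro _ ⟨y, rfl⟩
        refine hsum _ (abs_le.mpr ⟨?_, ?_⟩)
        · linarith [y.2.1]
        · linarith [y.2.2]
      have hxm := abs_le.mp hxd
      have h6 := le_ciSup hb ⟨x, by linarith [hxm.1], hxm.2⟩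
      simp only at h6
      have h7 : ‖g x‖ ≤ ‖∑' k : ℕ, a k * (x : ℂ) ^ k‖ + 3 * B * η := by
        have := norm_le_norm_add_norm_sub (∑' k : ℕ, a k * (x : ℂ) ^ k) (g x)
        linarith
      have h8 : ‖g x‖ * ‖w x‖ ≤ ‖g x‖ + B * η := by
        calc ‖g x‖ * ‖w x‖ ≤ ‖g x‖ * (1 + η) := by gcongr
          _ = ‖g x‖ + ‖g x‖ * η := by ring
          _ ≤ _ := by gcongr; exact hgB x
      linarith
    · have h2 := (hwa x hx1).2.2 hxd
      have h8 : ‖g x‖ * ‖w x‖ ≤ B * (2 * η) :=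
        mul_le_mul (hgB x) h2 (norm_nonneg _) hB0.le
      have h9 : 0 ≤ ⨆ y : Set.Icc (-r - δ / 2) (r + δ / 2),
          ‖∑' k : ℕ, a k * ((y : ℝ) : ℂ) ^ k‖ := Real.iSup_nonneg fun _ => norm_nonneg _
      linarith
end

section
/- Let δ' ∈ (0, 1), ε ∈ (0, 1), let K ≥ 1 be an integer, let b_0, …, b_{K−1} ∈ ℂ with B₁ := Σ_{k=0}^{K−1} |b_k| > 0, and let g : [−1+δ', 1−δ'] → ℂ satisfy |g(y) − Σ_{k=0}^{K−1} b_k y^k| ≤ ε/12 for all y ∈ [−1+δ', 1−δ']. Then, with M := max(2⌈(1/δ')·log(12B₁/ε)⌉, 0), there exist complex numbers c_{−M}, …, c_M with Σ_{m=−M}^{M} |c_m| ≤ B₁ such that |g(y) − Σ_{m=−M}^{M} c_m e^{iπmy/2}| ≤ ε/3 for all y ∈ [−1+δ', 1−δ']. -/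
theorem aux_u : ∃ u : ℕ → ℝ, (∀ n, 0 ≤ u n) ∧
    ∀ x : ℝ, |x| < 1 → HasSum (fun n => u n * x ^ (2 * n)) (1 / √(1 - x ^ 2)) := by
  refine ⟨fun n => Ring.choose ((1/2 : ℝ) + n - 1) n, fun n => ?_, fun x hx => ?_⟩
  · have h := Ring.factorial_nsmul_multichoose_eq_ascPochhammer (1/2 : ℝ) n
    rw [Ring.multichoose_eq, Polynomial.ascPochhammer_smeval_eq_eval] at h
    have h2 := ascPochhammer_pos n (1/2 : ℝ) (by norm_num)
    rw [← h, nsmul_eq_mul] at h2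
    have : (0:ℝ) < n.factorial := by positivity
    exact (pos_of_mul_pos_right h2 this.le).le
  · have h := (Real.one_div_one_sub_rpow_hasFPowerSeriesOnBall_zero (1/2)).hasSum (y := x ^ 2) (by
      rw [Metric.mem_eball, edist_dist, dist_zero_right, ENNReal.ofReal_lt_one, norm_pow]
      exact pow_lt_one₀ (norm_nonneg _) hx (by norm_num))
    simp only [zero_add, FormalMultilinearSeries.ofScalars_apply_eq, smul_eq_mul, ← pow_mul] at h
    rw [Real.sqrt_eq_rpow]
    exact h

theorem aux_arcsin (u : ℕ → ℝ) (h0 : ∀ n, 0 ≤ u n)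
    (hu : ∀ x : ℝ, |x| < 1 → HasSum (fun n => u n * x ^ (2 * n)) (1 / √(1 - x ^ 2)))
    (x : ℝ) (hx : |x| < 1) :
    HasSum (fun n : ℕ => u n / (2 * n + 1) * x ^ (2 * n + 1)) (Real.arcsin x) := by
  obtain ⟨r, hxr, hr1⟩ := exists_between hx
  have hr0 : 0 < r := (abs_nonneg x).trans_lt hxr
  set t : Set ℝ := Metric.ball 0 r with ht
  have hlt : ∀ y ∈ t, |y| < r := fun y hy => by simpa [ht] using hy
  have hxt : x ∈ t := by simpa [ht] using hxr
  have h0t : (0:ℝ) ∈ t := by simpa [ht] using hr0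
  have hc : Convex ℝ t := convex_ball 0 r
  have hsum : Summable (fun n => u n * r ^ (2 * n)) :=
    (hu r (by rwa [abs_of_pos hr0])).summable
  have hd : ∀ (n : ℕ) (y : ℝ), y ∈ t →
      HasDerivAt (fun y : ℝ => u n / (2 * n + 1) * y ^ (2 * n + 1)) (u n * y ^ (2 * n)) y := by
    intro n y _
    have := (hasDerivAt_pow (2 * n + 1) y).const_mul (u n / (2 * n + 1))
    have hne : (2 * (n:ℝ) + 1) ≠ 0 := by positivity
    have e : u n / (2 * n + 1) * (((2 * n + 1 : ℕ) : ℝ) * y ^ (2 * n + 1 - 1)) =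
        u n * y ^ (2 * n) := by
      rw [Nat.add_sub_cancel]
      push_cast
      rw [← mul_assoc, div_mul_cancel₀ _ hne]
    rw [← e]
    exact this
  have hb : ∀ (n : ℕ) (y : ℝ), y ∈ t → ‖u n * y ^ (2 * n)‖ ≤ u n * r ^ (2 * n) := by
    intro n y hy
    rw [norm_mul, norm_pow, Real.norm_eq_abs, Real.norm_eq_abs, abs_of_nonneg (h0 n)]
    exact mul_le_mul_of_nonneg_left (pow_le_pow_left₀ (abs_nonneg _) (hlt y hy).le _) (h0 n)
  have hs0 : Summable (fun n : ℕ => u n / (2 * n + 1) * (0:ℝ) ^ (2 * n + 1)) := by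
    simp
  have hS : Summable (fun n : ℕ => u n / (2 * n + 1) * x ^ (2 * n + 1)) :=
    summable_of_summable_hasDerivAt_of_isPreconnected
      (g := fun (n : ℕ) (z : ℝ) => u n / (2 * n + 1) * z ^ (2 * n + 1))
      (g' := fun (n : ℕ) (z : ℝ) => u n * z ^ (2 * n)) hsum Metric.isOpen_ball
      hc.isPreconnected hd hb h0t hs0 hxt
  have hD : ∀ y ∈ t, HasDerivAt (fun z => (∑' n : ℕ, u n / (2 * n + 1) * z ^ (2 * n + 1))
      - Real.arcsin z) 0 y := by
    intro y hy
    have hy1 : |y| < 1 := (hlt y hy).trans hr1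
    have h1 := hasDerivAt_tsum_of_isPreconnected
      (g := fun (n : ℕ) (z : ℝ) => u n / (2 * n + 1) * z ^ (2 * n + 1))
      (g' := fun (n : ℕ) (z : ℝ) => u n * z ^ (2 * n)) hsum Metric.isOpen_ball
      hc.isPreconnected hd hb h0t hs0 hy
    rw [(hu y hy1).tsum_eq] at h1
    have h2 := Real.hasDerivAt_arcsin (x := y) (by rintro rfl; simp at hy1) (by rintro rfl; simp at hy1)
    have h3 := h1.sub h2
    rw [sub_self] at h3
    exact h3
  have hconst := hc.is_const_of_fderivWithin_eq_zero (𝕜 := ℝ)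
    (fun y hy => (hD y hy).differentiableAt.differentiableWithinAt)
    (fun y hy => by
      have := (hD y hy).hasFDerivAt.hasFDerivWithinAt (s := t)
      rw [this.fderivWithin (Metric.isOpen_ball.uniqueDiffWithinAt hy)]
      ext; simp) hxt h0t
  have : ∑' n : ℕ, u n / (2 * n + 1) * x ^ (2 * n + 1) = Real.arcsin x := by
    simp at hconst
    linarith
  rw [← this]
  exact hS.hasSum

/-- `h` is a power series in `sin (π y / 2)` with coefficients of total weight at most `B`. -/
def SinRep (h : ℝ → ℂ) (B : ℝ) : Prop :=
  ∃ a : ℕ → ℂ, Summable (fun l => ‖a l‖) ∧ ∑' l, ‖a l‖ ≤ B ∧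
    ∀ y ∈ Set.Ioo (-1 : ℝ) 1,
      HasSum (fun l => a l * ((Real.sin (Real.pi * y / 2) : ℝ) : ℂ) ^ l) (h y)

theorem sinRep_one : SinRep (fun _ => 1) 1 := by
  refine ⟨fun l => if l = 0 then 1 else 0, ?_, ?_, fun y _ => ?_⟩
  · refine summable_of_ne_finset_zero (s := {0}) fun l hl => ?_
    simp at hl; simp [hl]
  · rw [tsum_eq_single 0 (by intro l hl; simp [hl])]; simp
  · convert hasSum_single 0 ?_ using 1
    · simp
    · intro l hl; simp [hl]

theorem SinRep.mul {f g : ℝ → ℂ} {A B : ℝ} (hf : SinRep f A) (hg : SinRep g B) :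
    SinRep (fun y => f y * g y) (A * B) := by
  obtain ⟨a, ha, haA, haf⟩ := hf
  obtain ⟨b, hb, hbB, hbg⟩ := hg
  have hn := summable_norm_sum_mul_antidiagonal_of_summable_norm
    (f := fun l => ‖a l‖) (g := fun l => ‖b l‖) (by simpa using ha) (by simpa using hb)
  have ht := tsum_mul_tsum_eq_tsum_sum_antidiagonal_of_summable_norm
    (f := fun l => ‖a l‖) (g := fun l => ‖b l‖) (by simpa using ha) (by simpa using hb)
  have hs := hn.of_norm
  have hle : ∀ n, ‖∑ kl ∈ Finset.HasAntidiagonal.antidiagonal n, a kl.1 * b kl.2‖ ≤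
      ∑ kl ∈ Finset.HasAntidiagonal.antidiagonal n, ‖a kl.1‖ * ‖b kl.2‖ := fun n =>
    (norm_sum_le _ _).trans (by simp)
  have hab := summable_norm_sum_mul_antidiagonal_of_summable_norm ha hb
  refine ⟨fun n => ∑ kl ∈ Finset.HasAntidiagonal.antidiagonal n, a kl.1 * b kl.2, hab, ?_, fun y hy => ?_⟩
  · calc _ ≤ ∑' n, ∑ kl ∈ Finset.HasAntidiagonal.antidiagonal n, ‖a kl.1‖ * ‖b kl.2‖ :=
          hab.tsum_le_tsum hle hs
      _ = (∑' l, ‖a l‖) * ∑' l, ‖b l‖ := ht.symm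
      _ ≤ A * B := mul_le_mul haA hbB (tsum_nonneg fun _ => norm_nonneg _)
          ((tsum_nonneg fun _ => norm_nonneg _).trans haA)
  · set x : ℂ := ((Real.sin (Real.pi * y / 2) : ℝ) : ℂ) with hxdef
    have hx1 : ‖x‖ ≤ 1 := by
      rw [hxdef, Complex.norm_real]; exact Real.abs_sin_le_one _
    have key : ∀ c : ℕ → ℂ, Summable (fun l => ‖c l‖) → Summable (fun l => ‖c l * x ^ l‖) := by
      intro c hc
      refine Summable.of_nonneg_of_le (fun _ => norm_nonneg _) (fun l => ?_) hc
      rw [norm_mul, norm_pow]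
      exact mul_le_of_le_one_right (norm_nonneg _) (pow_le_one₀ (norm_nonneg _) hx1)
    have h1 := tsum_mul_tsum_eq_tsum_sum_antidiagonal_of_summable_norm (key a ha) (key b hb)
    have h2 := (key _ hab).of_norm.hasSum
    rw [(haf y hy).tsum_eq, (hbg y hy).tsum_eq] at h1
    dsimp only
    rw [h1]
    have e : (fun n => ∑ kl ∈ Finset.HasAntidiagonal.antidiagonal n,
        a kl.1 * x ^ kl.1 * (b kl.2 * x ^ kl.2)) =
        fun n => (∑ kl ∈ Finset.HasAntidiagonal.antidiagonal n, a kl.1 * b kl.2) * x ^ n := by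
      funext n
      rw [Finset.sum_mul]
      refine Finset.sum_congr rfl fun kl hkl => ?_
      rw [← Finset.HasAntidiagonal.mem_antidiagonal.1 hkl, pow_add]; ring
    rw [e]
    exact h2

theorem SinRep.add {f g : ℝ → ℂ} {A B : ℝ} (hf : SinRep f A) (hg : SinRep g B) :
    SinRep (fun y => f y + g y) (A + B) := by
  obtain ⟨a, ha, haA, haf⟩ := hf
  obtain ⟨b, hb, hbB, hbg⟩ := hg
  have hab : Summable (fun l => ‖a l + b l‖) :=
    Summable.of_nonneg_of_le (fun _ => norm_nonneg _) (fun l => norm_add_le _ _) (ha.add hb)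
  refine ⟨fun l => a l + b l, hab, ?_, fun y hy => ?_⟩
  · calc _ ≤ ∑' l, (‖a l‖ + ‖b l‖) := hab.tsum_le_tsum (fun l => norm_add_le _ _) (ha.add hb)
      _ = _ := ha.tsum_add hb
      _ ≤ _ := add_le_add haA hbB
  · simpa [add_mul] using (haf y hy).add (hbg y hy)

theorem SinRep.const_mul {f : ℝ → ℂ} {A : ℝ} (hf : SinRep f A) (c : ℂ) :
    SinRep (fun y => c * f y) (‖c‖ * A) := by
  obtain ⟨a, ha, haA, haf⟩ := hf
  refine ⟨fun l => c * a l, by simpa using ha.mul_left ‖c‖, ?_, fun y hy => ?_⟩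
  · simp only [norm_mul]
    rw [tsum_mul_left]
    exact mul_le_mul_of_nonneg_left haA (norm_nonneg _)
  · simpa [mul_assoc] using (haf y hy).mul_left c

theorem sinRep_id : SinRep (fun y => (y : ℂ)) 1 := by
  obtain ⟨u, h0, hu⟩ := aux_u
  have hA := aux_arcsin u h0 hu
  set v : ℕ → ℝ := fun n => u n / (2 * n + 1) with hv
  have hv0 : ∀ n, 0 ≤ v n := fun n => div_nonneg (h0 n) (by positivity)
  have hpart : ∀ N, ∑ n ∈ Finset.range N, v n ≤ Real.pi / 2 := by
    intro N
    have hcont : Filter.Tendsto (fun x : ℝ => ∑ n ∈ Finset.range N, v n * x ^ (2 * n + 1))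
        (nhdsWithin 1 (Set.Iio 1)) (nhds (∑ n ∈ Finset.range N, v n * 1 ^ (2 * n + 1))) :=
      (Continuous.tendsto (by fun_prop) 1).mono_left nhdsWithin_le_nhds
    simp only [one_pow, mul_one] at hcont
    refine le_of_tendsto hcont ?_
    filter_upwards [Ioo_mem_nhdsLT (show (0:ℝ) < 1 by norm_num)] with x hx
    have hx' : |x| < 1 := by rw [abs_of_pos hx.1]; exact hx.2
    exact (sum_le_hasSum _ (fun n _ => mul_nonneg (hv0 n) (pow_nonneg hx.1.le _))
      (hA x hx')).trans (Real.arcsin_le_pi_div_two x)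
  have hvs : Summable v := summable_of_sum_range_le hv0 hpart
  have hvt : ∑' n, v n ≤ Real.pi / 2 := Real.tsum_le_of_sum_range_le hv0 hpart
  have hpi := Real.pi_pos
  have hinj : Function.Injective (fun n : ℕ => 2 * n + 1) := fun m n h => by
    simp at h; exact h
  set a : ℕ → ℂ := Function.extend (fun n : ℕ => 2 * n + 1)
    (fun n => ((2 / Real.pi * v n : ℝ) : ℂ)) 0 with ha
  have ha1 : ∀ n, a (2 * n + 1) = ((2 / Real.pi * v n : ℝ) : ℂ) := fun n =>
    hinj.extend_apply _ _ n
  have ha2 : ∀ l, l ∉ Set.range (fun n : ℕ => 2 * n + 1) → a l = 0 := fun l hl =>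
    Function.extend_apply' _ _ _ hl
  have hn : HasSum (fun l => ‖a l‖) (2 / Real.pi * ∑' n, v n) := by
    rw [← hinj.hasSum_iff (fun l hl => by simp [ha2 l hl])]
    have := hvs.hasSum.mul_left (2 / Real.pi)
    have e : (fun l => ‖a l‖) ∘ (fun n : ℕ => 2 * n + 1) = fun n => 2 / Real.pi * v n := by
      funext n
      simp only [Function.comp, ha1, Complex.norm_real, Real.norm_eq_abs]
      exact abs_of_nonneg (mul_nonneg (by positivity) (hv0 n))
    rw [e]
    exact this
  refine ⟨a, hn.summable, ?_, fun y hy => ?_⟩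
  · rw [hn.tsum_eq]
    calc _ ≤ 2 / Real.pi * (Real.pi / 2) := mul_le_mul_of_nonneg_left hvt (by positivity)
      _ = 1 := by field_simp
  · rw [← hinj.hasSum_iff (fun l hl => by simp [ha2 l hl])]
    have h1 : Real.pi * y / 2 < Real.pi / 2 := by nlinarith [hy.2]
    have h2 : -(Real.pi / 2) < Real.pi * y / 2 := by nlinarith [hy.1]
    have hx : |Real.sin (Real.pi * y / 2)| < 1 := by
      have hc := Real.cos_pos_of_mem_Ioo ⟨h2, h1⟩
      rw [← sq_lt_one_iff_abs_lt_one]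
      nlinarith [Real.sin_sq_add_cos_sq (Real.pi * y / 2)]
    have h := (hA _ hx).mul_left (2 / Real.pi)
    rw [Real.arcsin_sin h2.le h1.le] at h
    have h' := Complex.hasSum_ofReal.2 h
    convert h' using 1
    · ext n
      simp only [Function.comp, ha1, hv]
      push_cast; ring
    · congr 1; field_simp

theorem sinRep_pow (k : ℕ) : SinRep (fun y => (y : ℂ) ^ k) 1 := by
  induction k with
  | zero => simpa using sinRep_one
  | succ k ih => simpa [pow_succ] using ih.mul sinRep_id

theorem sinRep_poly (b : ℕ → ℂ) (K : ℕ) :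
    SinRep (fun y => ∑ k ∈ Finset.range K, b k * (y : ℂ) ^ k) (∑ k ∈ Finset.range K, ‖b k‖) := by
  induction K with
  | zero => simpa using sinRep_one.const_mul 0
  | succ k ih =>
    simp only [Finset.sum_range_succ]
    simpa using ih.add ((sinRep_pow k).const_mul (b k))


theorem sin_pow_expand (θ : ℝ) (l : ℕ) :
    ((Real.sin θ : ℝ) : ℂ) ^ l = ∑ j ∈ Finset.range (l + 1),
      ((-1) ^ (l - j) * (l.choose j : ℂ) / (2 * Complex.I) ^ l) *
        Complex.exp (((2 * j - l : ℤ) : ℂ) * (θ * Complex.I)) := by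
  have h : ((Real.sin θ : ℝ) : ℂ) = (Complex.exp (θ * Complex.I) + -Complex.exp (-(θ * Complex.I)))
      / (2 * Complex.I) := by
    rw [Complex.ofReal_sin, Complex.sin]
    field_simp
    rw [Complex.I_sq]; ring_nf
  rw [h, div_pow, add_pow, Finset.sum_div]
  refine Finset.sum_congr rfl fun j hj => ?_
  have hj' : j ≤ l := by simpa [Nat.lt_succ_iff] using hj
  have : Complex.exp (((2 * j - l : ℤ) : ℂ) * (θ * Complex.I)) =
      Complex.exp (θ * Complex.I) ^ j * Complex.exp (-(θ * Complex.I)) ^ (l - j) := by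
    rw [← Complex.exp_nat_mul, ← Complex.exp_nat_mul, ← Complex.exp_add]
    congr 1
    push_cast [Nat.cast_sub hj']; ring
  rw [this, neg_pow]
  ring

theorem cosh_pow_expand (t : ℝ) (l : ℕ) :
    Real.cosh t ^ l = ∑ j ∈ Finset.range (l + 1),
      ((l.choose j : ℝ) / 2 ^ l) * Real.exp (t * ((2 * j - l : ℤ) : ℝ)) := by
  rw [Real.cosh_eq, div_pow, add_pow, Finset.sum_div]
  refine Finset.sum_congr rfl fun j hj => ?_
  have hj' : j ≤ l := by simpa [Nat.lt_succ_iff] using hj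
  have : Real.exp (t * ((2 * j - l : ℤ) : ℝ)) = Real.exp t ^ j * Real.exp (-t) ^ (l - j) := by
    rw [← Real.exp_nat_mul, ← Real.exp_nat_mul, ← Real.exp_add]
    congr 1
    push_cast [Nat.cast_sub hj']; ring
  rw [this]; ring

theorem sin_bound (δ : ℝ) (h0 : 0 < δ) (h1 : δ < 1) (y : ℝ) (hy : y ∈ Set.Icc (-1 + δ) (1 - δ)) :
    |Real.sin (Real.pi * y / 2)| ≤ Real.exp (-(δ ^ 2 / 2)) := by
  have hpi := Real.pi_pos
  have key : ∀ z : ℝ, z ∈ Set.Icc (-1 + δ) (1 - δ) →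
      Real.sin (Real.pi * z / 2) ≤ Real.exp (-(δ ^ 2 / 2)) := by
    intro z hz
    have e : Real.sin (Real.pi * z / 2) = Real.cos (Real.pi * (1 - z) / 2) := by
      rw [← Real.cos_pi_div_two_sub]; ring_nf
    have hb := Real.cos_le_one_sub_mul_cos_sq (x := Real.pi * (1 - z) / 2) (by
      rw [abs_le]; constructor <;> nlinarith [hz.1, hz.2])
    have e2 : 2 / Real.pi ^ 2 * (Real.pi * (1 - z) / 2) ^ 2 = (1 - z) ^ 2 / 2 := by
      field_simp
    rw [e2] at hb
    have := Real.add_one_le_exp (-(δ ^ 2 / 2))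
    rw [e]
    nlinarith [hz.1, hz.2]
  rw [abs_le]
  constructor
  · have := key (-y) ⟨by linarith [hy.2], by linarith [hy.1]⟩
    rw [show Real.pi * -y / 2 = -(Real.pi * y / 2) by ring, Real.sin_neg] at this
    linarith
  · exact key y hy

theorem single_l (δ Λ : ℝ) (h0 : 0 < δ) (h1 : δ < 1) (M : ℤ)
    (hM : 2 * (Λ / δ) ≤ M) (l : ℕ) :
    ∃ w : ℤ → ℂ, ∑ m ∈ Finset.Icc (-M) M, ‖w m‖ ≤ 1 ∧
      ∀ y ∈ Set.Icc (-1 + δ) (1 - δ),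
        ‖((Real.sin (Real.pi * y / 2) : ℝ) : ℂ) ^ l - ∑ m ∈ Finset.Icc (-M) M,
          w m * Complex.exp (Complex.I * Real.pi * (m : ℂ) * (y : ℂ) / 2)‖ ≤ 2 * Real.exp (-Λ) := by
  by_cases hl : Λ < l * (δ ^ 2 / 2)
  · refine ⟨0, by simp, fun y hy => ?_⟩
    have hs := sin_bound δ h0 h1 y hy
    simp only [Pi.zero_apply, zero_mul, Finset.sum_const_zero, sub_zero, norm_pow,
      Complex.norm_real, Real.norm_eq_abs]
    calc _ ≤ Real.exp (-(δ ^ 2 / 2)) ^ l := pow_le_pow_left₀ (abs_nonneg _) hs l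
      _ = Real.exp (-(l * (δ ^ 2 / 2))) := by rw [← Real.exp_nat_mul]; congr 1; ring
      _ ≤ Real.exp (-Λ) := Real.exp_le_exp.2 (by linarith)
      _ ≤ _ := by linarith [Real.exp_pos (-Λ)]
  · push Not at hl
    set S := Finset.range (l + 1) with hS
    set A : ℕ → ℂ := fun j => (-1) ^ (l - j) * (l.choose j : ℂ) / (2 * Complex.I) ^ l with hA
    set s : ℕ → ℤ := fun j => 2 * j - l with hs
    have hAn : ∀ j, ‖A j‖ = (l.choose j : ℝ) / 2 ^ l := by
      intro j; simp [hA]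
    have hcosh : ∀ t : ℝ, ∑ j ∈ S, ‖A j‖ * Real.exp (t * (s j : ℝ)) = Real.cosh t ^ l := by
      intro t
      rw [cosh_pow_expand]
      exact Finset.sum_congr rfl fun j _ => by rw [hAn]
    have hswap : ∀ (F : ℤ → ℂ), ∑ m ∈ Finset.Icc (-M) M, (∑ j ∈ S, if s j = m then A j else 0) * F m
        = ∑ j ∈ S, if s j ∈ Finset.Icc (-M) M then A j * F (s j) else 0 := by
      intro F
      simp_rw [Finset.sum_mul]
      rw [Finset.sum_comm]
      refine Finset.sum_congr rfl fun j _ => ?_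
      simp only [ite_mul, zero_mul]
      rw [Finset.sum_ite_eq]
    refine ⟨fun m => ∑ j ∈ S, if s j = m then A j else 0, ?_, fun y hy => ?_⟩
    · calc _ ≤ ∑ m ∈ Finset.Icc (-M) M, ∑ j ∈ S, (if s j = m then ‖A j‖ else 0) := by
            refine Finset.sum_le_sum fun m _ => (norm_sum_le _ _).trans (le_of_eq ?_)
            refine Finset.sum_congr rfl fun j _ => ?_
            split_ifs <;> simp
        _ = ∑ j ∈ S, if s j ∈ Finset.Icc (-M) M then ‖A j‖ else 0 := by
            rw [Finset.sum_comm]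
            exact Finset.sum_congr rfl fun j _ => by rw [Finset.sum_ite_eq]
        _ ≤ ∑ j ∈ S, ‖A j‖ := Finset.sum_le_sum fun j _ => by
            split_ifs
            · exact le_rfl
            · exact norm_nonneg _
        _ = 1 := by simpa using hcosh 0
    · rw [hswap (fun m => Complex.exp (Complex.I * Real.pi * (m : ℂ) * (y : ℂ) / 2)),
        sin_pow_expand, ← Finset.sum_sub_distrib]
      have hexp : ∀ m : ℤ, Complex.exp ((m : ℂ) * (((Real.pi * y / 2 : ℝ) : ℂ) * Complex.I)) =
          Complex.exp (Complex.I * Real.pi * (m : ℂ) * (y : ℂ) / 2) := by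
        intro m; congr 1; push_cast; ring
      have hexpn : ∀ m : ℤ,
          ‖Complex.exp (Complex.I * Real.pi * (m : ℂ) * (y : ℂ) / 2)‖ = 1 := by
        intro m
        rw [← hexp, show (m : ℂ) * (((Real.pi * y / 2 : ℝ) : ℂ) * Complex.I) =
          ((m * (Real.pi * y / 2) : ℝ) : ℂ) * Complex.I by push_cast; ring]
        exact Complex.norm_exp_ofReal_mul_I _
      refine (norm_sum_le _ _).trans ?_
      calc _ ≤ ∑ j ∈ S, (‖A j‖ * Real.exp (δ * (s j : ℝ)) + ‖A j‖ * Real.exp (-δ * (s j : ℝ)))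
              * Real.exp (-(δ * M)) := by
            refine Finset.sum_le_sum fun j _ => ?_
            rw [hexp]
            change ‖A j * Complex.exp (Complex.I * Real.pi * (s j : ℂ) * (y : ℂ) / 2) - _‖ ≤ _
            split_ifs with hj
            · rw [sub_self, norm_zero]; positivity
            · rw [sub_zero, norm_mul, hexpn, mul_one, ← mul_add, mul_assoc]
              refine le_mul_of_one_le_right (norm_nonneg _) ?_
              rw [add_mul, ← Real.exp_add, ← Real.exp_add]
              rw [Finset.mem_Icc, not_and_or, not_le, not_le] at hj
              rcases hj with hj | hj
              · have hj' : (s j : ℝ) < -M := by exact_mod_cast hj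
                have : 1 ≤ Real.exp (-δ * (s j : ℝ) + -(δ * M)) := Real.one_le_exp (by nlinarith)
                linarith [Real.exp_pos (δ * (s j : ℝ) + -(δ * M))]
              · have hj' : (M : ℝ) < s j := by exact_mod_cast hj
                have : 1 ≤ Real.exp (δ * (s j : ℝ) + -(δ * M)) := Real.one_le_exp (by nlinarith)
                linarith [Real.exp_pos (-δ * (s j : ℝ) + -(δ * M))]
        _ = 2 * (Real.cosh δ ^ l * Real.exp (-(δ * M))) := by
            rw [← Finset.sum_mul, Finset.sum_add_distrib, hcosh, hcosh, Real.cosh_neg]; ring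
        _ ≤ 2 * (Real.exp (δ ^ 2 / 2) ^ l * Real.exp (-(δ * M))) := by
            gcongr
            exact Real.cosh_le_exp_half_sq δ
        _ = 2 * Real.exp (l * (δ ^ 2 / 2) + -(δ * M)) := by
            rw [← Real.exp_nat_mul, Real.exp_add]
        _ ≤ _ := by
            have : 2 * Λ ≤ δ * M := by
              calc 2 * Λ = δ * (2 * (Λ / δ)) := by field_simp
                _ ≤ _ := mul_le_mul_of_nonneg_left hM h0.le
            have := Real.exp_le_exp.2 (show l * (δ ^ 2 / 2) + -(δ * M) ≤ -Λ by linarith)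
            linarith

theorem combine (δ Λ B : ℝ) (h0 : 0 < δ) (h1 : δ < 1) (M : ℤ)
    (hM : 2 * (Λ / δ) ≤ M) (h : ℝ → ℂ) (hh : SinRep h B) :
    ∃ c : ℤ → ℂ, ∑ m ∈ Finset.Icc (-M) M, ‖c m‖ ≤ B ∧
      ∀ y ∈ Set.Icc (-1 + δ) (1 - δ),
        ‖h y - ∑ m ∈ Finset.Icc (-M) M,
          c m * Complex.exp (Complex.I * Real.pi * (m : ℂ) * (y : ℂ) / 2)‖
          ≤ B * (2 * Real.exp (-Λ)) := by
  obtain ⟨d, hd, hdB, hdh⟩ := hh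
  choose w hw1 hw2 using single_l δ Λ h0 h1 M hM
  have hle : ∀ m ∈ Finset.Icc (-M) M, ∀ l, ‖w l m‖ ≤ 1 := fun m hm l =>
    (Finset.single_le_sum (f := fun m => ‖w l m‖) (fun _ _ => norm_nonneg _) hm).trans (hw1 l)
  have hsn : ∀ m ∈ Finset.Icc (-M) M, Summable (fun l => ‖d l * w l m‖) := by
    intro m hm
    refine Summable.of_nonneg_of_le (fun _ => norm_nonneg _) (fun l => ?_) hd
    rw [norm_mul]
    exact mul_le_of_le_one_right (norm_nonneg _) (hle m hm l)
  refine ⟨fun m => ∑' l, d l * w l m, ?_, fun y hy => ?_⟩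
  · calc _ ≤ ∑ m ∈ Finset.Icc (-M) M, ∑' l, ‖d l * w l m‖ :=
          Finset.sum_le_sum fun m hm => norm_tsum_le_tsum_norm (hsn m hm)
      _ = ∑' l, ∑ m ∈ Finset.Icc (-M) M, ‖d l * w l m‖ :=
          (Summable.tsum_finsetSum hsn).symm
      _ ≤ ∑' l, ‖d l‖ := by
          refine Summable.tsum_le_tsum (fun l => ?_) (summable_sum hsn) hd
          simp only [norm_mul]
          rw [← Finset.mul_sum]
          exact mul_le_of_le_one_right (norm_nonneg _) (hw1 l)
      _ ≤ B := hdB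
  · have e1 := hdh y ⟨by linarith [hy.1], by linarith [hy.2]⟩
    have e2 : HasSum (fun l => ∑ m ∈ Finset.Icc (-M) M, (d l * w l m) *
        Complex.exp (Complex.I * Real.pi * (m : ℂ) * (y : ℂ) / 2))
        (∑ m ∈ Finset.Icc (-M) M, (∑' l, d l * w l m) *
        Complex.exp (Complex.I * Real.pi * (m : ℂ) * (y : ℂ) / 2)) :=
      hasSum_sum fun m hm => (hsn m hm).of_norm.hasSum.mul_right _
    have e3 := e1.sub e2
    rw [← e3.tsum_eq]
    refine (tsum_of_norm_bounded (hd.hasSum.mul_right (2 * Real.exp (-Λ))) fun l => ?_).trans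
      (mul_le_mul_of_nonneg_right hdB (by positivity))
    simp_rw [mul_assoc (d l)]
    rw [← Finset.mul_sum, ← mul_sub, norm_mul]
    exact mul_le_mul_of_nonneg_left (hw2 l y hy) (norm_nonneg _)



/-- (Low-weight approximation by Fourier series.) Let `δ' ∈ (0,1)`,
`ε ∈ (0,1)`, `K ≥ 1`, `b₀,…,b_{K−1} ∈ ℂ` with `B₁ = Σ |bₖ| > 0`, and suppose
`g : [−1+δ', 1−δ'] → ℂ` satisfies `|g(y) − Σ bₖ yᵏ| ≤ ε/12` there. Then with
`M = max(2⌈(1/δ')·log(12B₁/ε)⌉, 0)` there exist `c_{−M},…,c_M ∈ ℂ` with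
`Σ |cₘ| ≤ B₁` and `|g(y) − Σₘ cₘ e^{iπmy/2}| ≤ ε/3` on `[−1+δ', 1−δ']`. -/
theorem fourier_low_weight_approx (δ' ε : ℝ) (hδ0 : 0 < δ') (hδ1 : δ' < 1)
    (hε0 : 0 < ε) (hε1 : ε < 1) (K : ℕ) (hK : 1 ≤ K) (b : ℕ → ℂ)
    (hB : 0 < ∑ k ∈ Finset.range K, ‖b k‖) (g : ℝ → ℂ)
    (hg : ∀ y ∈ Set.Icc (-1 + δ') (1 - δ'),
      ‖g y - ∑ k ∈ Finset.range K, b k * (y : ℂ) ^ k‖ ≤ ε / 12) :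
    ∃ c : ℤ → ℂ,
      (∑ m ∈ Finset.Icc
          (-(max (2 * ⌈(1 / δ') * Real.log (12 * (∑ k ∈ Finset.range K, ‖b k‖) / ε)⌉) 0))
          (max (2 * ⌈(1 / δ') * Real.log (12 * (∑ k ∈ Finset.range K, ‖b k‖) / ε)⌉) 0),
        ‖c m‖) ≤ ∑ k ∈ Finset.range K, ‖b k‖ ∧
      ∀ y ∈ Set.Icc (-1 + δ') (1 - δ'),
        ‖g y - ∑ m ∈ Finset.Icc
            (-(max (2 * ⌈(1 / δ') * Real.log (12 * (∑ k ∈ Finset.range K, ‖b k‖) / ε)⌉) 0))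
            (max (2 * ⌈(1 / δ') * Real.log (12 * (∑ k ∈ Finset.range K, ‖b k‖) / ε)⌉) 0),
          c m * Complex.exp (Complex.I * Real.pi * (m : ℂ) * (y : ℂ) / 2)‖ ≤ ε / 3 := by
  set B := ∑ k ∈ Finset.range K, ‖b k‖ with hBdef
  set Λ := Real.log (12 * B / ε) with hΛ
  set M := max (2 * ⌈(1 / δ') * Λ⌉) 0 with hMdef
  have hq : 0 < 12 * B / ε := by positivity
  have hM : 2 * (Λ / δ') ≤ (M : ℝ) := by
    have h1 : (1 / δ') * Λ ≤ (⌈(1 / δ') * Λ⌉ : ℝ) := Int.le_ceil _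
    have h2 : ((2 * ⌈(1 / δ') * Λ⌉ : ℤ) : ℝ) ≤ (M : ℝ) := by exact_mod_cast le_max_left _ _
    push_cast at h2
    have : Λ / δ' = (1 / δ') * Λ := by ring
    linarith
  obtain ⟨c, hc1, hc2⟩ := combine δ' Λ B hδ0 hδ1 M hM _ (sinRep_poly b K)
  refine ⟨c, hc1, fun y hy => ?_⟩
  have hexp : B * (2 * Real.exp (-Λ)) = ε / 6 := by
    rw [Real.exp_neg, hΛ, Real.exp_log hq]
    field_simp
    norm_num
  have h1 := hg y hy
  have h2 := hc2 y hy
  rw [hexp] at h2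
  have h3 := norm_sub_le_norm_sub_add_norm_sub (g y)
    (∑ k ∈ Finset.range K, b k * (y : ℂ) ^ k) (∑ m ∈ Finset.Icc (-M) M,
          c m * Complex.exp (Complex.I * Real.pi * (m : ℂ) * (y : ℂ) / 2))
  linarith
end

section
/- There exists a universal constant C > 0 with the following property. For all real numbers t > 0, λ > 0, Γ with 0 < Γ ≤ λ, and ε ∈ (0, 1), there exist polynomials P_cos and P_sin with complex coefficients of degree at most C·(t·√(λΓ) + √(λ/Γ)·(1 + log(1/ε))) such that sup_{x ∈ [−1,1]} |P_cos(x)| ≤ 1 and sup_{x ∈ [−1,1]} |P_sin(x)| ≤ 1, and for all x with |x| ≤ √(Γ/λ): |P_cos(x) − cos(tλx²)| ≤ 2ε and |P_sin(x) − sin(tλx²)| ≤ 2ε. -/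
open Polynomial in
lemma kernel_poly (M : ℕ) : ∃ V : Polynomial ℝ, V.natDegree ≤ 4 * M ∧
    ∀ x ∈ Set.Icc (-1 : ℝ) 1, 0 ≤ V.eval x ∧ V.eval x ≤ 1 ∧
      V.eval x * ((2 * M + 1) * x) ^ 2 ≤ 1 ∧ ((M * x) ^ 2 ≤ 1 / 16 → 3 / 4 ≤ V.eval x) := by
  set D : Polynomial ℝ := 1 + C 2 * ∑ j ∈ Finset.range M,
    (Chebyshev.T ℝ ((j + 1 : ℕ) : ℤ)).comp (1 - C 2 * X ^ 2) with hD
  have hq : (1 - C 2 * X ^ 2 : Polynomial ℝ).natDegree ≤ 2 := by compute_degree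
  have hdeg : D.natDegree ≤ 2 * M := by
    refine (natDegree_add_le _ _).trans (max_le (by simp) ?_)
    refine (natDegree_C_mul_le _ _).trans ?_
    refine natDegree_sum_le_of_forall_le _ _ ?_
    intro j hj
    rw [Finset.mem_range] at hj
    refine natDegree_comp_le.trans ?_
    rw [Chebyshev.natDegree_T]
    simp only [Int.natAbs_natCast]
    calc (j + 1) * _ ≤ (j + 1) * 2 := Nat.mul_le_mul_left _ hq
      _ ≤ 2 * M := by omega
  have hev : ∀ θ : ℝ, D.eval (Real.sin θ) =
      1 + 2 * ∑ j ∈ Finset.range M, Real.cos (2 * (j + 1) * θ) := by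
    intro θ
    have h1 : 1 - 2 * Real.sin θ ^ 2 = Real.cos (2 * θ) := by
      rw [Real.cos_two_mul, Real.cos_sq']; ring
    simp only [hD, eval_add, eval_one, eval_mul, eval_C, eval_finsetSum, eval_comp, eval_sub,
      eval_pow, eval_X, h1, Chebyshev.T_real_cos]
    congr 2
    refine Finset.sum_congr rfl fun j _ => ?_
    push_cast
    congr 1; ring
  have hsin : ∀ θ : ℝ, Real.sin θ * (1 + 2 * ∑ j ∈ Finset.range M, Real.cos (2 * (j + 1) * θ))
      = Real.sin ((2 * M + 1) * θ) := by
    intro θ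
    clear hev hdeg hD D
    induction M with
    | zero => simp
    | succ k ih =>
      rw [Finset.sum_range_succ]
      have e1 : (2 * (k : ℝ) + 1) * θ = 2 * (k + 1) * θ - θ := by ring
      have e2 : (2 * ((k + 1 : ℕ) : ℝ) + 1) * θ = 2 * (k + 1) * θ + θ := by push_cast; ring
      rw [e1, Real.sin_sub] at ih
      rw [e2, Real.sin_add]
      linear_combination ih
  have hsj : ∀ (θ : ℝ) (j : ℕ), |Real.sin (j * θ)| ≤ j * |Real.sin θ| := by
    intro θ j
    induction j with
    | zero => simp
    | succ k ih =>
      have : ((k + 1 : ℕ) : ℝ) * θ = k * θ + θ := by push_cast; ring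
      rw [this, Real.sin_add]
      refine (abs_add_le _ _).trans ?_
      rw [abs_mul, abs_mul]
      push_cast
      have := Real.abs_cos_le_one θ
      have := Real.abs_cos_le_one (k * θ)
      have := abs_nonneg (Real.sin θ)
      have := abs_nonneg (Real.sin (k * θ))
      nlinarith
  have hNpos : (0 : ℝ) < 2 * M + 1 := by positivity
  refine ⟨(C (1 / (2 * M + 1 : ℝ)) * D) ^ 2, ?_, ?_⟩
  · refine natDegree_pow_le.trans ?_
    have := (natDegree_C_mul_le (1 / (2 * M + 1 : ℝ)) D).trans hdeg
    omega
  · intro x hx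
    obtain ⟨θ, rfl⟩ : ∃ θ, Real.sin θ = x := ⟨Real.arcsin x, Real.sin_arcsin hx.1 hx.2⟩
    simp only [eval_pow, eval_mul, eval_C]
    have h1 := hsin θ
    rw [← hev] at h1
    have hup : D.eval (Real.sin θ) ≤ 2 * M + 1 := by
      rw [hev]
      have : ∑ j ∈ Finset.range M, Real.cos (2 * (j + 1) * θ) ≤ ∑ j ∈ Finset.range M, (1 : ℝ) :=
        Finset.sum_le_sum fun j _ => Real.cos_le_one _
      simp at this
      linarith
    have hlo : -(2 * M + 1 : ℝ) ≤ D.eval (Real.sin θ) := by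
      rw [hev]
      have : ∑ j ∈ Finset.range M, (-1 : ℝ) ≤ ∑ j ∈ Finset.range M, Real.cos (2 * (j + 1) * θ) :=
        Finset.sum_le_sum fun j _ => Real.neg_one_le_cos _
      simp at this
      linarith
    have hlo2 : 1 + 2 * (M * (1 - 2 * (M * Real.sin θ) ^ 2)) ≤ D.eval (Real.sin θ) := by
      rw [hev]
      have : ∑ j ∈ Finset.range M, (1 - 2 * (M * Real.sin θ) ^ 2) ≤
          ∑ j ∈ Finset.range M, Real.cos (2 * (j + 1) * θ) := by
        refine Finset.sum_le_sum fun j hj => ?_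
        rw [Finset.mem_range] at hj
        have e : 2 * ((j : ℝ) + 1) * θ = 2 * (((j + 1 : ℕ) : ℝ) * θ) := by push_cast; ring
        rw [e, Real.cos_two_mul, Real.cos_sq']
        have h2 : |Real.sin (((j + 1 : ℕ) : ℝ) * θ)| ≤ |M * Real.sin θ| := by
          refine (hsj θ (j + 1)).trans ?_
          rw [abs_mul, Nat.abs_cast]
          have : ((j + 1 : ℕ) : ℝ) ≤ M := by exact_mod_cast hj
          gcongr
        have := sq_le_sq.mpr h2
        linarith
      simp at this
      linarith
    refine ⟨by positivity, ?_, ?_, ?_⟩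
    · rw [sq_le_one_iff_abs_le_one, one_div, inv_mul_eq_div, abs_div, abs_of_pos hNpos,
        div_le_one hNpos]
      exact abs_le.mpr ⟨hlo, hup⟩
    · have : (1 / (2 * (M : ℝ) + 1) * D.eval (Real.sin θ)) ^ 2 * ((2 * M + 1) * Real.sin θ) ^ 2
          = (Real.sin θ * D.eval (Real.sin θ)) ^ 2 := by field_simp
      rw [this, h1]
      exact Real.sin_sq_le_one _
    · intro h
      have h7 : 7 / 8 ≤ 1 / (2 * (M : ℝ) + 1) * D.eval (Real.sin θ) := by
        rw [one_div, inv_mul_eq_div, le_div_iff₀ hNpos]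
        have : (0 : ℝ) ≤ M := by positivity
        nlinarith
      nlinarith

open Polynomial in
lemma majority_poly (J : ℕ) : ∃ B : Polynomial ℝ, B.natDegree ≤ 4 * J ∧
    ∀ v ∈ Set.Icc (0 : ℝ) 1, 0 ≤ B.eval v ∧ B.eval v ≤ 1 ∧
      B.eval v ≤ (16 * v ^ 2) ^ J ∧ (3 / 4 ≤ v → 1 - B.eval v ≤ (9 / 16) ^ J) := by
  set A : Polynomial ℝ := ∑ j ∈ Finset.range (2 * J), bernsteinPolynomial ℝ (4 * J) j with hA
  set B : Polynomial ℝ := ∑ j ∈ Finset.Ico (2 * J) (4 * J + 1), bernsteinPolynomial ℝ (4 * J) j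
    with hB
  have hAB : A + B = 1 := by
    rw [hA, hB, Finset.sum_range_add_sum_Ico _ (by omega), bernsteinPolynomial.sum]
  have hch : ∀ s : Finset ℕ, s ⊆ Finset.range (4 * J + 1) →
      ∑ j ∈ s, ((4 * J).choose j : ℝ) ≤ 16 ^ J := by
    intro s hs
    calc _ ≤ ∑ j ∈ Finset.range (4 * J + 1), ((4 * J).choose j : ℝ) :=
          Finset.sum_le_sum_of_subset_of_nonneg hs (fun _ _ _ => by positivity)
      _ = 16 ^ J := by
          rw [← Nat.cast_sum, Nat.sum_range_choose]
          push_cast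
          rw [pow_mul]; norm_num
  refine ⟨B, ?_, ?_⟩
  · refine natDegree_sum_le_of_forall_le _ _ ?_
    intro j hj
    rw [Finset.mem_Ico] at hj
    unfold bernsteinPolynomial
    have h1 : (1 - X : Polynomial ℝ).natDegree ≤ 1 := by compute_degree
    have h2 : ((1 - X : Polynomial ℝ) ^ (4 * J - j)).natDegree ≤ 4 * J - j :=
      natDegree_pow_le.trans (by nlinarith)
    have h3 : ((((4 * J).choose j : ℕ) : Polynomial ℝ) * X ^ j).natDegree ≤ j := by
      refine natDegree_mul_le.trans ?_
      simp
    refine natDegree_mul_le.trans ?_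
    omega
  · intro v hv
    obtain ⟨hv0, hv1⟩ := hv
    have hv2 : 0 ≤ 1 - v := by linarith
    have eA : A.eval v = ∑ j ∈ Finset.range (2 * J),
        ((4 * J).choose j : ℝ) * v ^ j * (1 - v) ^ (4 * J - j) := by
      simp [hA, bernsteinPolynomial, eval_finsetSum]
    have eB : B.eval v = ∑ j ∈ Finset.Ico (2 * J) (4 * J + 1),
        ((4 * J).choose j : ℝ) * v ^ j * (1 - v) ^ (4 * J - j) := by
      simp [hB, bernsteinPolynomial, eval_finsetSum]
    have hsum : A.eval v + B.eval v = 1 := by rw [← eval_add, hAB, eval_one]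
    have A0 : 0 ≤ A.eval v := by rw [eA]; exact Finset.sum_nonneg fun j _ => by positivity
    have B0 : 0 ≤ B.eval v := by rw [eB]; exact Finset.sum_nonneg fun j _ => by positivity
    refine ⟨B0, by linarith, ?_, ?_⟩
    · rw [eB, mul_pow, ← pow_mul]
      calc _ ≤ ∑ j ∈ Finset.Ico (2 * J) (4 * J + 1), ((4 * J).choose j : ℝ) * v ^ (2 * J) := by
            refine Finset.sum_le_sum fun j hj => ?_
            rw [Finset.mem_Ico] at hj
            have h1 : v ^ j ≤ v ^ (2 * J) := pow_le_pow_of_le_one hv0 hv1 hj.1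
            have h2 : (1 - v) ^ (4 * J - j) ≤ 1 := pow_le_one₀ hv2 (by linarith)
            calc _ ≤ ((4 * J).choose j : ℝ) * v ^ (2 * J) * 1 := by gcongr
              _ = _ := by ring
        _ = (∑ j ∈ Finset.Ico (2 * J) (4 * J + 1), ((4 * J).choose j : ℝ)) * v ^ (2 * J) := by
            rw [Finset.sum_mul]
        _ ≤ _ := by
            gcongr
            exact hch _ (fun j hj => by simp at hj ⊢; omega)
    · intro h
      have : 1 - B.eval v = A.eval v := by linarith
      rw [this, eA]
      calc _ ≤ ∑ j ∈ Finset.range (2 * J), ((4 * J).choose j : ℝ) * (3 / 16) ^ (2 * J) := by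
            refine Finset.sum_le_sum fun j hj => ?_
            rw [Finset.mem_range] at hj
            rw [mul_assoc]
            refine mul_le_mul_of_nonneg_left ?_ (by positivity)
            have e : v ^ j * (1 - v) ^ (4 * J - j) = (v * (1 - v)) ^ j * ((1 - v) ^ 2) ^ (2 * J - j) := by
              rw [mul_pow, mul_assoc, ← pow_mul, ← pow_add]
              congr 2; omega
            rw [e]
            have h1 : v * (1 - v) ≤ 3 / 16 := by nlinarith
            have h2 : (1 - v) ^ 2 ≤ 3 / 16 := by nlinarith
            calc _ ≤ (3 / 16 : ℝ) ^ j * (3 / 16) ^ (2 * J - j) := by gcongr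
              _ = _ := by rw [← pow_add]; congr 1; omega
        _ = (∑ j ∈ Finset.range (2 * J), ((4 * J).choose j : ℝ)) * (3 / 16) ^ (2 * J) := by
            rw [Finset.sum_mul]
        _ ≤ 16 ^ J * (3 / 16) ^ (2 * J) := by
            gcongr
            exact hch _ (fun j hj => by simp at hj ⊢; omega)
        _ = _ := by rw [pow_mul, ← mul_pow]; norm_num

lemma taylor_tail (z : ℂ) (J : ℕ) (hJ : 2 * ‖z‖ ≤ J) :
    ‖Complex.exp z - ∑ m ∈ Finset.range J, z ^ m / (m.factorial : ℂ)‖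
      ≤ 2 * Real.exp (3 * ‖z‖ - J) := by
  have h0 : ‖z‖ / (J.succ : ℝ) ≤ 1 / 2 := by
    rw [div_le_iff₀ (by positivity)]; push_cast; linarith
  refine (Complex.exp_bound' h0).trans ?_
  have h1 := Real.pow_div_factorial_le_exp (3 * ‖z‖) (by positivity) J
  have h3 : Real.exp 1 ≤ 3 := by have := Real.exp_one_lt_d9; linarith
  have h4 : Real.exp J ≤ 3 ^ J := by
    have : Real.exp J = Real.exp 1 ^ J := by rw [← Real.exp_nat_mul]; simp
    rw [this]; gcongr
  rw [mul_comm]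
  gcongr
  rw [Real.exp_sub, le_div_iff₀ (Real.exp_pos _)]
  calc _ ≤ ‖z‖ ^ J / J.factorial * 3 ^ J := by gcongr
    _ = (3 * ‖z‖) ^ J / J.factorial := by rw [mul_pow]; ring
    _ ≤ _ := h1

set_option maxHeartbeats 1000000 in
open Polynomial in
lemma core_approx (τ δ ε : ℝ) (hτ : 0 ≤ τ) (hδ : 0 < δ) (hδ1 : δ ≤ 1) (hε : 0 < ε) (hε1 : ε < 1)
    (a b : ℂ) (ha : ‖a‖ ≤ 1 / 2) (hb : ‖b‖ ≤ 1 / 2) :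
    ∃ P : Polynomial ℂ,
      (P.natDegree : ℝ) ≤ 300006 * ((τ + 1 + Real.log (1 / ε)) / δ) ∧
      (∀ x ∈ Set.Icc (-1 : ℝ) 1, ‖P.eval (x : ℂ)‖ ≤ 1) ∧
      (∀ x : ℝ, |x| ≤ δ →
        ‖P.eval (x : ℂ) - (a * Complex.exp ((τ * x ^ 2 / δ ^ 2 : ℝ) * Complex.I)
          + b * Complex.exp (-((τ * x ^ 2 / δ ^ 2 : ℝ) * Complex.I)))‖ ≤ 2 * ε) := by
  set ℓ := Real.log (1 / ε) with hℓ
  have hℓ0 : 0 ≤ ℓ := Real.log_nonneg (by rw [le_div_iff₀ hε]; linarith)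
  have hexpℓ : Real.exp (-ℓ) = ε := by
    rw [hℓ, one_div, Real.log_inv, neg_neg, Real.exp_log hε]
  set n := τ + 1 + ℓ with hn
  have hn1 : 1 ≤ n := by linarith
  set J := ⌈50000 * n⌉₊ with hJ
  have hJlo : 50000 * n ≤ J := Nat.le_ceil _
  have hJhi : (J : ℝ) ≤ 50001 * n := by
    have := Nat.ceil_lt_add_one (a := 50000 * n) (by positivity)
    linarith
  set M := ⌊1 / (4 * δ)⌋₊ with hM
  have hMhi : (M : ℝ) ≤ 1 / (4 * δ) := Nat.floor_le (by positivity)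
  have hMlo : 1 / (4 * δ) < M + 1 := Nat.lt_floor_add_one _
  have hMδ : (M : ℝ) * δ ≤ 1 / 4 := by
    rw [le_div_iff₀ (by positivity)] at hMhi; linarith
  have hMδ' : 1 ≤ (2 * (M : ℝ) + 1) * (4 * δ) := by
    rw [div_lt_iff₀ (by positivity)] at hMlo
    have : (0 : ℝ) ≤ M * (4 * δ) := by positivity
    linarith
  obtain ⟨V, hVdeg, hV⟩ := kernel_poly M
  obtain ⟨B, hBdeg, hB⟩ := majority_poly J
  set Q : Polynomial ℂ := ∑ j ∈ Finset.range J,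
    C ((a * Complex.I ^ j + b * (-Complex.I) ^ j) * ((τ / δ ^ 2 : ℝ) : ℂ) ^ j / (j.factorial : ℂ))
      * X ^ (2 * j) with hQ
  have hQdeg : Q.natDegree ≤ 2 * J := by
    refine natDegree_sum_le_of_forall_le _ _ ?_
    intro j hj
    rw [Finset.mem_range] at hj
    exact (natDegree_C_mul_X_pow_le _ _).trans (by omega)
  -- the two terms
  have hQev : ∀ x : ℝ, Q.eval (x : ℂ) =
      a * ∑ j ∈ Finset.range J, ((τ * x ^ 2 / δ ^ 2 : ℝ) * Complex.I) ^ j / (j.factorial : ℂ)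
      + b * ∑ j ∈ Finset.range J,
        (-((τ * x ^ 2 / δ ^ 2 : ℝ) * Complex.I)) ^ j / (j.factorial : ℂ) := by
    intro x
    rw [hQ, eval_finsetSum, Finset.mul_sum, Finset.mul_sum, ← Finset.sum_add_distrib]
    refine Finset.sum_congr rfl fun j _ => ?_
    have e : ((τ * x ^ 2 / δ ^ 2 : ℝ) : ℂ) = ((τ / δ ^ 2 : ℝ) : ℂ) * (x : ℂ) ^ 2 := by
      push_cast; ring
    rw [e, ← mul_neg, mul_pow, mul_pow, mul_pow, ← pow_mul]
    simp only [eval_mul, eval_C, eval_pow, eval_X]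
    ring
  set f : ℝ → ℂ := fun x => a * Complex.exp ((τ * x ^ 2 / δ ^ 2 : ℝ) * Complex.I)
          + b * Complex.exp (-((τ * x ^ 2 / δ ^ 2 : ℝ) * Complex.I)) with hf
  have hf1 : ∀ x, ‖f x‖ ≤ 1 := by
    intro x
    refine (norm_add_le _ _).trans ?_
    rw [norm_mul, norm_mul, Complex.norm_exp_ofReal_mul_I, ← neg_mul, ← Complex.ofReal_neg,
      Complex.norm_exp_ofReal_mul_I]
    linarith
  have hynorm : ∀ x : ℝ, ‖((τ * x ^ 2 / δ ^ 2 : ℝ) * Complex.I : ℂ)‖ = τ * x ^ 2 / δ ^ 2 := by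
    intro x
    rw [norm_mul, Complex.norm_I, mul_one, Complex.norm_real, Real.norm_of_nonneg (by positivity)]
  -- inner approximation
  have hin : ∀ x : ℝ, x ^ 2 / δ ^ 2 ≤ 16384 → ‖Q.eval (x : ℂ) - f x‖ ≤ ε / 2 := by
    intro x hx
    have hy : τ * x ^ 2 / δ ^ 2 ≤ 16384 * τ := by
      rw [mul_div_assoc]; nlinarith
    have hcond : 2 * (τ * x ^ 2 / δ ^ 2) ≤ J := by linarith
    have t1 := taylor_tail ((τ * x ^ 2 / δ ^ 2 : ℝ) * Complex.I) J (by rw [hynorm]; exact hcond)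
    have t2 := taylor_tail (-((τ * x ^ 2 / δ ^ 2 : ℝ) * Complex.I)) J
      (by rw [norm_neg, hynorm]; exact hcond)
    rw [norm_neg] at t2
    rw [hynorm] at t1 t2
    have hT : 2 * Real.exp (3 * (τ * x ^ 2 / δ ^ 2) - J) ≤ ε / 2 := by
      have h1 : Real.exp (3 * (τ * x ^ 2 / δ ^ 2) - J) ≤ Real.exp (-3 + -ℓ) :=
        Real.exp_le_exp.mpr (by linarith)
      rw [Real.exp_add, hexpℓ] at h1
      have h3 : Real.exp (-3) ≤ 1 / 4 := by
        rw [Real.exp_neg, ← one_div]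
        have := Real.add_one_le_exp (3 : ℝ)
        exact one_div_le_one_div_of_le (by norm_num) (by linarith)
      nlinarith
    rw [hQev]
    simp only [hf]
    rw [norm_sub_rev]
    generalize (∑ j ∈ Finset.range J,
      ((τ * x ^ 2 / δ ^ 2 : ℝ) * Complex.I) ^ j / (j.factorial : ℂ)) = s1 at t1 ⊢
    generalize (∑ j ∈ Finset.range J,
      (-((τ * x ^ 2 / δ ^ 2 : ℝ) * Complex.I)) ^ j / (j.factorial : ℂ)) = s2 at t2 ⊢
    generalize Complex.exp ((τ * x ^ 2 / δ ^ 2 : ℝ) * Complex.I) = e1 at t1 ⊢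
    generalize Complex.exp (-((τ * x ^ 2 / δ ^ 2 : ℝ) * Complex.I)) = e2 at t2 ⊢
    have : a * e1 + b * e2 - (a * s1 + b * s2) = a * (e1 - s1) + b * (e2 - s2) := by ring
    rw [this]
    refine (norm_add_le _ _).trans ?_
    rw [norm_mul, norm_mul]
    have := norm_nonneg (e1 - s1)
    have := norm_nonneg (e2 - s2)
    nlinarith
  -- outer growth
  have hout : ∀ x : ℝ, 1 ≤ x ^ 2 / δ ^ 2 → ‖Q.eval (x : ℂ)‖ ≤ Real.exp τ * (x ^ 2 / δ ^ 2) ^ J := by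
    intro x hx
    have hs : ∀ z : ℂ, ‖z‖ = τ * x ^ 2 / δ ^ 2 →
        ‖∑ j ∈ Finset.range J, z ^ j / (j.factorial : ℂ)‖ ≤ Real.exp τ * (x ^ 2 / δ ^ 2) ^ J := by
      intro z hz
      calc _ ≤ ∑ j ∈ Finset.range J, ‖z ^ j / (j.factorial : ℂ)‖ := norm_sum_le _ _
        _ ≤ ∑ j ∈ Finset.range J, τ ^ j / (j.factorial : ℝ) * (x ^ 2 / δ ^ 2) ^ J := by
            refine Finset.sum_le_sum fun j hj => ?_
            rw [Finset.mem_range] at hj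
            rw [norm_div, norm_pow, hz, Complex.norm_natCast, mul_div_assoc, mul_pow, mul_div_right_comm]
            have := pow_le_pow_right₀ hx hj.le
            gcongr
        _ = (∑ j ∈ Finset.range J, τ ^ j / (j.factorial : ℝ)) * (x ^ 2 / δ ^ 2) ^ J := by
            rw [Finset.sum_mul]
        _ ≤ _ := by
            gcongr
            exact Real.sum_le_exp_of_nonneg hτ J
    rw [hQev]
    refine (norm_add_le _ _).trans ?_
    rw [norm_mul, norm_mul]
    have h1 := hs _ (hynorm x)
    have h2 := hs (-((τ * x ^ 2 / δ ^ 2 : ℝ) * Complex.I)) (by rw [norm_neg, hynorm])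
    have := mul_le_mul ha h1 (norm_nonneg _) (by norm_num)
    have := mul_le_mul hb h2 (norm_nonneg _) (by norm_num)
    linarith
  set W : Polynomial ℝ := B.comp V with hW
  have hWdeg : W.natDegree ≤ 16 * (J * M) := by
    refine natDegree_comp_le.trans ((Nat.mul_le_mul hBdeg hVdeg).trans (by nlinarith))
  have hWev : ∀ x : ℝ, (W.map (algebraMap ℝ ℂ)).eval (x : ℂ) = ((W.eval x : ℝ) : ℂ) := by
    intro x
    rw [eval_map_algebraMap]
    exact aeval_algebraMap_apply_eq_algebraMap_eval x W
  have hWb : ∀ x ∈ Set.Icc (-1 : ℝ) 1, 0 ≤ W.eval x ∧ W.eval x ≤ 1 := by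
    intro x hx
    obtain ⟨v0, v1, -, -⟩ := hV x hx
    obtain ⟨b0, b1, -, -⟩ := hB _ ⟨v0, v1⟩
    rw [hW, eval_comp]; exact ⟨b0, b1⟩
  have hP0 : ∀ x ∈ Set.Icc (-1 : ℝ) 1, ‖Q.eval (x : ℂ) * ((W.eval x : ℝ) : ℂ)‖ ≤ 1 + ε / 2 := by
    intro x hx
    obtain ⟨w0, w1⟩ := hWb x hx
    rw [norm_mul, Complex.norm_real, Real.norm_of_nonneg w0]
    rcases le_total (x ^ 2 / δ ^ 2) 16384 with h | h
    · have h1 := hin x h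
      have h2 := hf1 x
      have h3 : ‖Q.eval (x : ℂ)‖ ≤ 1 + ε / 2 := by
        have := norm_add_le (Q.eval (x : ℂ) - f x) (f x)
        rw [sub_add_cancel] at this; linarith
      have := norm_nonneg (Q.eval (x : ℂ))
      nlinarith
    · have h1 := hout x (by linarith)
      obtain ⟨v0, v1, v2, -⟩ := hV x hx
      obtain ⟨-, -, b2, -⟩ := hB _ ⟨v0, v1⟩
      have hWe : W.eval x = B.eval (V.eval x) := by rw [hW, eval_comp]
      rw [hWe] at w0 ⊢
      generalize V.eval x = v at *
      set w := x ^ 2 / δ ^ 2 with hw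
      have hvw : v * w ≤ 16 := by
        have e : x ^ 2 = w * δ ^ 2 := by rw [hw]; field_simp
        have e2 : v * ((2 * (M : ℝ) + 1) * x) ^ 2 = v * w * ((2 * (M : ℝ) + 1) * δ) ^ 2 := by
          rw [mul_pow, e]; ring
        rw [e2] at v2
        have h3 : 1 / 4 ≤ (2 * (M : ℝ) + 1) * δ := by linarith
        have h4 : (1 / 4) ^ 2 ≤ ((2 * (M : ℝ) + 1) * δ) ^ 2 := by gcongr
        have h5 : 0 ≤ v * w := by positivity
        have h6 := mul_le_mul_of_nonneg_left h4 h5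
        linarith
      have hk : w * (16 * v ^ 2) ≤ 1 / 4 := by
        have h5 := mul_le_mul_of_nonneg_left h v0
        have hv : v ≤ 1 / 1024 := by linarith
        have h6 := mul_le_mul_of_nonneg_left hvw v0
        have h7 : w * (16 * v ^ 2) = 16 * (v * (v * w)) := by ring
        linarith
      calc _ ≤ (Real.exp τ * w ^ J) * (16 * v ^ 2) ^ J := by gcongr
        _ = Real.exp τ * (w * (16 * v ^ 2)) ^ J := by rw [mul_pow w]; ring
        _ ≤ Real.exp τ * Real.exp (-1) ^ J := by
            have h4 : (1 : ℝ) / 4 ≤ Real.exp (-1) := by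
              rw [Real.exp_neg, ← one_div]
              have := Real.exp_one_lt_d9
              exact one_div_le_one_div_of_le (Real.exp_pos _) (by linarith)
            have := hk.trans h4
            gcongr
        _ = Real.exp (τ - J) := by
            rw [← Real.exp_nat_mul, ← Real.exp_add]; congr 1; ring
        _ ≤ 1 := by rw [Real.exp_le_one_iff]; linarith
        _ ≤ _ := by linarith
  refine ⟨C (((1 + ε / 2)⁻¹ : ℝ) : ℂ) * (Q * W.map (algebraMap ℝ ℂ)), ?_, ?_, ?_⟩
  · have hd : (C (((1 + ε / 2)⁻¹ : ℝ) : ℂ) * (Q * W.map (algebraMap ℝ ℂ))).natDegree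
        ≤ 2 * J + 16 * (J * M) := by
      refine (natDegree_C_mul_le _ _).trans (natDegree_mul_le.trans ?_)
      have := natDegree_map_le (f := algebraMap ℝ ℂ) (p := W)
      omega
    have hd' : ((C (((1 + ε / 2)⁻¹ : ℝ) : ℂ) * (Q * W.map (algebraMap ℝ ℂ))).natDegree : ℝ)
        ≤ 2 * J + 16 * (J * M) := by exact_mod_cast hd
    refine hd'.trans ?_
    rw [← mul_div_assoc, le_div_iff₀ hδ]
    have hJ0 : (0 : ℝ) ≤ J := by positivity
    nlinarith [mul_le_mul_of_nonneg_left hMδ hJ0, mul_le_mul_of_nonneg_left hδ1 hJ0]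
  · intro x hx
    rw [eval_mul, eval_C, eval_mul, hWev, norm_mul, Complex.norm_real,
      Real.norm_of_nonneg (by positivity), inv_mul_le_iff₀ (by positivity), mul_one]
    exact hP0 x hx
  · intro x hx
    have hxI : x ∈ Set.Icc (-1 : ℝ) 1 := abs_le.mp (hx.trans hδ1)
    have hx2 : x ^ 2 ≤ δ ^ 2 := by rw [sq_le_sq, abs_of_pos hδ]; exact hx
    have hw1 : x ^ 2 / δ ^ 2 ≤ 1 := by rw [div_le_one (by positivity)]; exact hx2
    have h1 := hin x (by linarith)
    have h2 := hf1 x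
    have h0 := hP0 x hxI
    obtain ⟨w0, w1⟩ := hWb x hxI
    have hw2 : 1 - W.eval x ≤ ε / 2 := by
      obtain ⟨v0, v1, -, v3⟩ := hV x hxI
      obtain ⟨-, -, -, b3⟩ := hB _ ⟨v0, v1⟩
      have hMx : ((M : ℝ) * x) ^ 2 ≤ 1 / 16 := by
        have : ((M : ℝ) * x) ^ 2 ≤ (M * δ) ^ 2 := by
          rw [mul_pow, mul_pow]; gcongr
        have : (M : ℝ) * δ ≥ 0 := by positivity
        nlinarith
      rw [hW, eval_comp]
      refine (b3 (v3 hMx)).trans ?_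
      have h9 : (9 / 16 : ℝ) ≤ Real.exp (-(7 / 16)) := by
        have := Real.add_one_le_exp (-(7 / 16) : ℝ); linarith
      calc (9 / 16 : ℝ) ^ J ≤ Real.exp (-(7 / 16)) ^ J := by gcongr
        _ = Real.exp (J * -(7 / 16)) := by rw [← Real.exp_nat_mul]
        _ ≤ Real.exp (-1 + -ℓ) := Real.exp_le_exp.mpr (by linarith)
        _ = Real.exp (-1) * ε := by rw [Real.exp_add, hexpℓ]
        _ ≤ 1 / 2 * ε := by
            gcongr
            rw [Real.exp_neg, ← one_div]
            have := Real.add_one_le_exp (1 : ℝ)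
            exact one_div_le_one_div_of_le (by norm_num) (by linarith)
        _ = ε / 2 := by ring
    change ‖_ - f x‖ ≤ _
    rw [eval_mul, eval_C, eval_mul, hWev]
    generalize Q.eval (x : ℂ) = q at *
    generalize W.eval x = w at *
    have e : (((1 + ε / 2)⁻¹ : ℝ) : ℂ) * (q * (w : ℂ)) - f x =
        (((1 + ε / 2)⁻¹ - 1 : ℝ) : ℂ) * (q * (w : ℂ)) + ((q - f x) * (w : ℂ)
          + f x * ((w - 1 : ℝ) : ℂ)) := by
      push_cast; ring
    rw [e]
    have i1 : ‖(((1 + ε / 2)⁻¹ - 1 : ℝ) : ℂ) * (q * (w : ℂ))‖ ≤ ε / 2 := by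
      rw [norm_mul, Complex.norm_real]
      have : (1 + ε / 2)⁻¹ - 1 = -((ε / 2) / (1 + ε / 2)) := by field_simp; ring
      rw [this, norm_neg, Real.norm_of_nonneg (by positivity)]
      calc _ ≤ (ε / 2) / (1 + ε / 2) * (1 + ε / 2) := by gcongr
        _ = ε / 2 := by field_simp
    have i2 : ‖(q - f x) * (w : ℂ)‖ ≤ ε / 2 := by
      rw [norm_mul, Complex.norm_real, Real.norm_of_nonneg w0]
      have := norm_nonneg (q - f x)
      nlinarith
    have i3 : ‖f x * ((w - 1 : ℝ) : ℂ)‖ ≤ ε / 2 := by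
      rw [norm_mul, Complex.norm_real, Real.norm_of_nonpos (by linarith)]
      have := norm_nonneg (f x)
      nlinarith
    have j1 := norm_add_le ((((1 + ε / 2)⁻¹ - 1 : ℝ) : ℂ) * (q * (w : ℂ))) ((q - f x) * (w : ℂ)
          + f x * ((w - 1 : ℝ) : ℂ))
    have j2 := norm_add_le ((q - f x) * (w : ℂ)) (f x * ((w - 1 : ℝ) : ℂ))
    linarith


/-- There is a universal constant `C > 0` such that for all `t > 0`,
`0 < Γ ≤ λ`, and `ε ∈ (0,1)`, there are complex polynomials `P_cos`, `P_sin` of degree at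
most `C·(t√(λΓ) + √(λ/Γ)(1 + log(1/ε)))`, bounded by 1 on `[−1,1]`, that `2ε`-approximate
`cos(tλx²)` and `sin(tλx²)` for all `|x| ≤ √(Γ/λ)`. -/
theorem poly_approx_cos_sin_quadratic :
    ∃ C : ℝ, 0 < C ∧
      ∀ (t lam Γ ε : ℝ), 0 < t → 0 < lam → 0 < Γ → Γ ≤ lam → 0 < ε → ε < 1 →
        ∃ Pc Ps : Polynomial ℂ,
          (Pc.natDegree : ℝ) ≤
            C * (t * Real.sqrt (lam * Γ) + Real.sqrt (lam / Γ) * (1 + Real.log (1 / ε))) ∧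
          (Ps.natDegree : ℝ) ≤
            C * (t * Real.sqrt (lam * Γ) + Real.sqrt (lam / Γ) * (1 + Real.log (1 / ε))) ∧
          (∀ x ∈ Set.Icc (-1 : ℝ) 1, ‖Pc.eval (x : ℂ)‖ ≤ 1) ∧
          (∀ x ∈ Set.Icc (-1 : ℝ) 1, ‖Ps.eval (x : ℂ)‖ ≤ 1) ∧
          (∀ x : ℝ, |x| ≤ Real.sqrt (Γ / lam) →
            ‖Pc.eval (x : ℂ) - ((Real.cos (t * lam * x ^ 2) : ℝ) : ℂ)‖ ≤ 2 * ε) ∧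
          (∀ x : ℝ, |x| ≤ Real.sqrt (Γ / lam) →
            ‖Ps.eval (x : ℂ) - ((Real.sin (t * lam * x ^ 2) : ℝ) : ℂ)‖ ≤ 2 * ε) := by
  refine ⟨300006, by norm_num, ?_⟩
  intro t lam Γ ε ht hl hΓ hΓl hε hε1
  have hδ : 0 < Real.sqrt (Γ / lam) := Real.sqrt_pos.mpr (by positivity)
  have hδ1 : Real.sqrt (Γ / lam) ≤ 1 := by
    rw [Real.sqrt_le_one, div_le_one hl]; exact hΓl
  have hsq : Real.sqrt (Γ / lam) ^ 2 = Γ / lam := Real.sq_sqrt (by positivity)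
  have hinv : Real.sqrt (lam / Γ) = 1 / Real.sqrt (Γ / lam) := by
    rw [one_div, ← Real.sqrt_inv, inv_div]
  have hmul : t * Real.sqrt (lam * Γ) = t * Γ / Real.sqrt (Γ / lam) := by
    rw [mul_div_assoc]
    congr 1
    rw [eq_div_iff hδ.ne', ← Real.sqrt_mul (by positivity)]
    have : lam * Γ * (Γ / lam) = Γ ^ 2 := by field_simp
    rw [this, Real.sqrt_sq hΓ.le]
  have hdeg : (t * Γ + 1 + Real.log (1 / ε)) / Real.sqrt (Γ / lam) =
      t * Real.sqrt (lam * Γ) + Real.sqrt (lam / Γ) * (1 + Real.log (1 / ε)) := by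
    rw [hmul, hinv]; ring
  have harg : ∀ x : ℝ, t * Γ * x ^ 2 / Real.sqrt (Γ / lam) ^ 2 = t * lam * x ^ 2 := by
    intro x; rw [hsq]; field_simp
  obtain ⟨Pc, c1, c2, c3⟩ := core_approx (t * Γ) (Real.sqrt (Γ / lam)) ε (by positivity) hδ hδ1
    hε hε1 (1 / 2) (1 / 2) (by norm_num) (by norm_num)
  obtain ⟨Ps, s1, s2, s3⟩ := core_approx (t * Γ) (Real.sqrt (Γ / lam)) ε (by positivity) hδ hδ1
    hε hε1 (-Complex.I / 2) (Complex.I / 2) (by simp) (by simp)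
  rw [hdeg] at c1 s1
  refine ⟨Pc, Ps, c1, s1, c2, s2, ?_, ?_⟩
  · intro x hx
    have := c3 x hx
    rw [harg] at this
    convert this using 3
    rw [Complex.ofReal_cos, Complex.cos, neg_mul]; ring
  · intro x hx
    have := s3 x hx
    rw [harg] at this
    convert this using 3
    rw [Complex.ofReal_sin, Complex.sin, neg_mul]; ring
end

section
/- Let t > 0, ε > 0, and Δ ∈ (0, 1] satisfy 1 ≥ √ε, √ε ≥ tΔ, and tΔ ≥ 8ε, and set θ_M := arcsin(√Δ). Let K be a nonnegative integer and let P(θ) = Σ_{k=−K}^{K} a_k e^{ikθ} with a_k ∈ ℂ be a trigonometric polynomial of degree at most K such that |P(θ)| ≤ 1 for all θ ∈ ℝ and |e^{−it·sin²θ} − P(θ)| ≤ ε for all θ ∈ [−θ_M, θ_M]. Then K ≥ (1/π)·√(2t). -/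
/-- The even part of the trigonometric polynomial. -/
noncomputable def evenPart (K : ℕ) (a : ℤ → ℂ) (θ : ℝ) : ℂ :=
  ∑ k ∈ Finset.Icc (-(K : ℤ)) (K : ℤ), a k * ((Real.cos (k * θ) : ℝ) : ℂ)

lemma evenPart_eq (K : ℕ) (a : ℤ → ℂ) (θ : ℝ) :
    evenPart K a θ = (1 / 2 : ℂ) *
      ((∑ k ∈ Finset.Icc (-(K : ℤ)) (K : ℤ),
          a k * Complex.exp (Complex.I * (k : ℂ) * (θ : ℂ))) +
       ∑ k ∈ Finset.Icc (-(K : ℤ)) (K : ℤ),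
          a k * Complex.exp (Complex.I * (k : ℂ) * ((-θ : ℝ) : ℂ))) := by
  unfold evenPart
  rw [← Finset.sum_add_distrib, Finset.mul_sum]
  refine Finset.sum_congr rfl fun k _ => ?_
  push_cast
  rw [Complex.cos]
  have e1 : (k : ℂ) * θ * Complex.I = Complex.I * k * θ := by ring
  have e2 : -((k : ℂ) * θ) * Complex.I = Complex.I * k * -θ := by ring
  rw [e1, e2]
  ring

/-- Fourier expansion of the periodised parabola. -/
lemma parabola_hasSum (K : ℕ) (k : ℤ) (hk : k ∈ Finset.Icc (-(K : ℤ)) (K : ℤ)) :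
    HasSum (fun n : ℕ => 4 * (K : ℝ) ^ 2 / Real.pi ^ 2 * (Real.cos (n * Real.pi) / (n : ℝ) ^ 2) *
      Real.cos (k * (n * Real.pi / K))) ((k : ℝ) ^ 2 - (K : ℝ) ^ 2 / 3) := by
  rw [Finset.mem_Icc] at hk
  rcases Nat.eq_zero_or_pos K with h0 | hK
  · subst h0
    have : k = 0 := by simp at hk; omega
    subst this
    simp
  have hK' : (0 : ℝ) < K := by exact_mod_cast hK
  have hk1 : -(K : ℝ) ≤ k := by exact_mod_cast hk.1
  have hk2 : (k : ℝ) ≤ K := by exact_mod_cast hk.2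
  have hx : (1 / 2 + (k : ℝ) / (2 * K)) ∈ Set.Icc (0 : ℝ) 1 := by
    have : 1 / 2 + (k : ℝ) / (2 * K) = (K + k) / (2 * K) := by field_simp
    rw [this]
    constructor
    · apply div_nonneg <;> linarith
    · rw [div_le_one (by linarith)]; linarith
  have h := (hasSum_one_div_nat_pow_mul_cos one_ne_zero hx).mul_left
    (4 * (K : ℝ) ^ 2 / Real.pi ^ 2)
  have hpi := Real.pi_pos
  convert! h using 1
  · funext n
    have : 2 * Real.pi * n * (1 / 2 + (k : ℝ) / (2 * K)) =
      n * Real.pi + k * (n * Real.pi / K) := by field_simp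
    rw [this, Real.cos_add, Real.sin_nat_mul_pi]
    ring
  · have hb : (Polynomial.map (algebraMap ℚ ℝ) (Polynomial.bernoulli (2 * 1))).eval
        (1 / 2 + (k : ℝ) / (2 * K)) = (1 / 2 + (k : ℝ) / (2 * K)) ^ 2
          - (1 / 2 + (k : ℝ) / (2 * K)) + 1 / 6 := by
      simp [Polynomial.bernoulli_def, Finset.sum_range_succ, bernoulli_eq_bernoulli'_of_ne_one,
        bernoulli_one, bernoulli'_two, Polynomial.eval_add]
      ring
    rw [hb]
    norm_num [Nat.factorial]
    field_simp
    ring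

lemma second_deriv_bound (K : ℕ) (a : ℤ → ℂ) (hG : ∀ θ, ‖evenPart K a θ‖ ≤ 1) (θ : ℝ) :
    ‖∑ k ∈ Finset.Icc (-(K : ℤ)) (K : ℤ),
      a k * ((k ^ 2 * Real.cos (k * θ) : ℝ) : ℂ)‖ ≤ (K : ℝ) ^ 2 := by
  set c : ℕ → ℝ := fun n => 4 * (K : ℝ) ^ 2 / Real.pi ^ 2 * (Real.cos (n * Real.pi) / (n : ℝ) ^ 2)
    with hc
  have hpi := Real.pi_pos
  have h : HasSum (fun n : ℕ => ∑ k ∈ Finset.Icc (-(K : ℤ)) (K : ℤ),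
      a k * ((Real.cos (k * θ) : ℝ) : ℂ) * ((c n * Real.cos (k * (n * Real.pi / K)) : ℝ) : ℂ))
      (∑ k ∈ Finset.Icc (-(K : ℤ)) (K : ℤ),
        a k * ((Real.cos (k * θ) : ℝ) : ℂ) * (((k : ℝ) ^ 2 - (K : ℝ) ^ 2 / 3 : ℝ) : ℂ)) := by
    apply hasSum_sum
    intro k hk
    exact (Complex.hasSum_ofReal.mpr (parabola_hasSum K k hk)).mul_left _
  have hterm : ∀ n : ℕ, ‖∑ k ∈ Finset.Icc (-(K : ℤ)) (K : ℤ),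
      a k * ((Real.cos (k * θ) : ℝ) : ℂ) * ((c n * Real.cos (k * (n * Real.pi / K)) : ℝ) : ℂ)‖
      ≤ 4 * (K : ℝ) ^ 2 / Real.pi ^ 2 * (1 / (n : ℝ) ^ 2) := by
    intro n
    have e : ∑ k ∈ Finset.Icc (-(K : ℤ)) (K : ℤ),
      a k * ((Real.cos (k * θ) : ℝ) : ℂ) * ((c n * Real.cos (k * (n * Real.pi / K)) : ℝ) : ℂ)
      = (c n : ℂ) * ((1 / 2 : ℂ) * (evenPart K a (θ + n * Real.pi / K) +
          evenPart K a (θ - n * Real.pi / K))) := by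
      unfold evenPart
      rw [← Finset.sum_add_distrib, Finset.mul_sum, Finset.mul_sum]
      refine Finset.sum_congr rfl fun k _ => ?_
      rw [mul_add (k : ℝ), mul_sub (k : ℝ), Real.cos_add, Real.cos_sub]
      push_cast
      ring
    rw [e, norm_mul, norm_mul]
    have h1 : ‖(c n : ℂ)‖ ≤ 4 * (K : ℝ) ^ 2 / Real.pi ^ 2 * (1 / (n : ℝ) ^ 2) := by
      rw [Complex.norm_real, Real.norm_eq_abs, hc]
      simp only [abs_mul, abs_div, abs_pow, Nat.abs_cast, abs_of_pos hpi]
      have := Real.abs_cos_le_one (n * Real.pi)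
      rw [abs_of_pos (by norm_num : (0 : ℝ) < 4)]
      gcongr
    have h2 : ‖(1 / 2 : ℂ)‖ * ‖evenPart K a (θ + n * Real.pi / K) +
          evenPart K a (θ - n * Real.pi / K)‖ ≤ 1 := by
      have := norm_add_le (evenPart K a (θ + n * Real.pi / K)) (evenPart K a (θ - n * Real.pi / K))
      have h3 := hG (θ + n * Real.pi / K)
      have h4 := hG (θ - n * Real.pi / K)
      have h5 : ‖(1 / 2 : ℂ)‖ = 1 / 2 := by norm_num
      rw [h5]
      linarith
    calc _ ≤ ‖(c n : ℂ)‖ * 1 := by gcongr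
      _ ≤ _ := by rw [mul_one]; exact h1
  have hz := hasSum_zeta_two.mul_left (4 * (K : ℝ) ^ 2 / Real.pi ^ 2)
  have hle := tsum_of_norm_bounded hz hterm
  rw [h.tsum_eq] at hle
  have hval : 4 * (K : ℝ) ^ 2 / Real.pi ^ 2 * (Real.pi ^ 2 / 6) = 2 * (K : ℝ) ^ 2 / 3 := by
    field_simp; ring
  rw [hval] at hle
  have e : ∑ k ∈ Finset.Icc (-(K : ℤ)) (K : ℤ),
      a k * ((k ^ 2 * Real.cos (k * θ) : ℝ) : ℂ) =
      (∑ k ∈ Finset.Icc (-(K : ℤ)) (K : ℤ),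
        a k * ((Real.cos (k * θ) : ℝ) : ℂ) * (((k : ℝ) ^ 2 - (K : ℝ) ^ 2 / 3 : ℝ) : ℂ))
      + (((K : ℝ) ^ 2 / 3 : ℝ) : ℂ) * evenPart K a θ := by
    unfold evenPart
    rw [Finset.mul_sum, ← Finset.sum_add_distrib]
    refine Finset.sum_congr rfl fun k _ => ?_
    push_cast
    ring
  rw [e]
  refine (norm_add_le _ _).trans ?_
  rw [norm_mul, Complex.norm_real, Real.norm_eq_abs, abs_of_nonneg (by positivity)]
  have : (K : ℝ) ^ 2 / 3 * ‖evenPart K a θ‖ ≤ (K : ℝ) ^ 2 / 3 * 1 := by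
    gcongr; exact hG θ
  linarith

lemma evenPart_sub_le (K : ℕ) (a : ℤ → ℂ) (hG : ∀ θ, ‖evenPart K a θ‖ ≤ 1) (θ : ℝ) (hθ : 0 ≤ θ) :
    ‖evenPart K a θ - evenPart K a 0‖ ≤ (K : ℝ) ^ 2 * θ ^ 2 := by
  set D : ℝ → ℂ := fun x => ∑ k ∈ Finset.Icc (-(K : ℤ)) (K : ℤ),
      a k * ((-(k * Real.sin (k * x)) : ℝ) : ℂ) with hD
  have d1 : ∀ x, HasDerivAt (evenPart K a) (D x) x := by
    intro x
    unfold evenPart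
    apply HasDerivAt.fun_sum
    intro k _
    apply HasDerivAt.const_mul
    apply HasDerivAt.ofReal_comp
    have := ((hasDerivAt_id' x).const_mul (k : ℝ)).cos
    convert! this using 1
    ring
  have d2 : ∀ x, HasDerivAt D (-∑ k ∈ Finset.Icc (-(K : ℤ)) (K : ℤ),
      a k * ((k ^ 2 * Real.cos (k * x) : ℝ) : ℂ)) x := by
    intro x
    rw [← Finset.sum_neg_distrib]
    apply HasDerivAt.fun_sum
    intro k _
    rw [← mul_neg, ← Complex.ofReal_neg]
    apply HasDerivAt.const_mul
    apply HasDerivAt.ofReal_comp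
    have := (((hasDerivAt_id' x).const_mul (k : ℝ)).sin.const_mul (k : ℝ)).neg
    convert! this using 1
    ring
  have D0 : D 0 = 0 := by simp [hD]
  have b1 : ∀ x ∈ Set.Icc 0 θ, ‖D x‖ ≤ (K : ℝ) ^ 2 * θ := by
    intro x hx
    have := norm_image_sub_le_of_norm_deriv_le_segment' (f := D) (a := 0) (b := θ)
      (C := (K : ℝ) ^ 2)
      (fun y _ => (d2 y).hasDerivWithinAt)
      (fun y _ => by rw [norm_neg]; exact second_deriv_bound K a hG y) x hx
    rw [D0, sub_zero, sub_zero] at this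
    refine this.trans ?_
    gcongr
    exact hx.2
  have := norm_image_sub_le_of_norm_deriv_le_segment' (f := evenPart K a) (a := 0) (b := θ)
      (C := (K : ℝ) ^ 2 * θ)
      (fun y _ => (d1 y).hasDerivWithinAt)
      (fun y hy => b1 y (Set.Ico_subset_Icc_self hy)) θ ⟨hθ, le_rfl⟩
  rw [sub_zero] at this
  linarith

/-- (Lower bound on the degree of trigonometric-polynomial
approximations.) Let `t > 0`, `ε > 0`, `Δ ∈ (0,1]` satisfy `1 ≥ √ε ≥ tΔ ≥ 8ε`, and set
`θ_M = arcsin √Δ`. If a trigonometric polynomial `P(θ) = Σ_{k=−K}^{K} aₖ e^{ikθ}`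
satisfies `|P(θ)| ≤ 1` for all `θ` and `|e^{−it sin²θ} − P(θ)| ≤ ε` on `[−θ_M, θ_M]`,
then `K ≥ (1/π)√(2t)`. -/
theorem trig_poly_degree_lower_bound (t ε Δ : ℝ) (ht : 0 < t) (hε : 0 < ε)
    (hΔ0 : 0 < Δ) (hΔ1 : Δ ≤ 1)
    (h1 : Real.sqrt ε ≤ 1) (h2 : t * Δ ≤ Real.sqrt ε) (h3 : 8 * ε ≤ t * Δ)
    (K : ℕ) (a : ℤ → ℂ)
    (hbound : ∀ θ : ℝ,
      ‖∑ k ∈ Finset.Icc (-(K : ℤ)) (K : ℤ),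
          a k * Complex.exp (Complex.I * (k : ℂ) * (θ : ℂ))‖ ≤ 1)
    (happrox : ∀ θ ∈ Set.Icc (-Real.arcsin (Real.sqrt Δ)) (Real.arcsin (Real.sqrt Δ)),
      ‖Complex.exp (-Complex.I * (t : ℂ) * ((Real.sin θ : ℝ) : ℂ) ^ 2) -
          ∑ k ∈ Finset.Icc (-(K : ℤ)) (K : ℤ),
            a k * Complex.exp (Complex.I * (k : ℂ) * (θ : ℂ))‖ ≤ ε) :
    (1 / Real.pi) * Real.sqrt (2 * t) ≤ (K : ℝ) := by
  have hpi := Real.pi_pos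
  have hy0 : 0 < t * Δ := by positivity
  have hy1 : t * Δ ≤ 1 := h2.trans h1
  set φ := Real.arcsin (Real.sqrt Δ) with hφ
  have hsq1 : Real.sqrt Δ ≤ 1 := Real.sqrt_le_one.mpr hΔ1
  have hsq0 : 0 ≤ Real.sqrt Δ := Real.sqrt_nonneg _
  have hφ0 : 0 ≤ φ := Real.arcsin_nonneg.mpr hsq0
  have hφ1 : φ ≤ Real.pi / 2 := Real.arcsin_le_pi_div_two _
  have hsin : Real.sin φ = Real.sqrt Δ := Real.sin_arcsin (by linarith) hsq1
  have hsinsq : Real.sin φ ^ 2 = Δ := by rw [hsin, Real.sq_sqrt hΔ0.le]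
  have hG : ∀ θ, ‖evenPart K a θ‖ ≤ 1 := by
    intro θ
    rw [evenPart_eq, norm_mul, (by norm_num : ‖(1 / 2 : ℂ)‖ = 1 / 2)]
    have h5 := hbound θ
    have h6 := hbound (-θ)
    have h7 := norm_add_le (∑ k ∈ Finset.Icc (-(K : ℤ)) (K : ℤ),
          a k * Complex.exp (Complex.I * (k : ℂ) * (θ : ℂ)))
          (∑ k ∈ Finset.Icc (-(K : ℤ)) (K : ℤ),
          a k * Complex.exp (Complex.I * (k : ℂ) * ((-θ : ℝ) : ℂ)))
    linarith
  have hA : ∀ θ ∈ Set.Icc (-φ) φ,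
      ‖Complex.exp (-Complex.I * (t : ℂ) * ((Real.sin θ : ℝ) : ℂ) ^ 2) - evenPart K a θ‖ ≤ ε := by
    intro θ hθ
    have h5 := happrox θ hθ
    have h6 := happrox (-θ) ⟨by linarith [hθ.2], by linarith [hθ.1]⟩
    have e0 : (((Real.sin (-θ) : ℝ) : ℂ)) ^ 2 = ((Real.sin θ : ℝ) : ℂ) ^ 2 := by
      rw [Real.sin_neg]; push_cast; ring
    rw [e0] at h6
    rw [evenPart_eq]
    generalize (∑ k ∈ Finset.Icc (-(K : ℤ)) (K : ℤ),
          a k * Complex.exp (Complex.I * (k : ℂ) * (θ : ℂ))) = u at *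
    generalize (∑ k ∈ Finset.Icc (-(K : ℤ)) (K : ℤ),
          a k * Complex.exp (Complex.I * (k : ℂ) * ((-θ : ℝ) : ℂ))) = v at *
    generalize Complex.exp (-Complex.I * (t : ℂ) * ((Real.sin θ : ℝ) : ℂ) ^ 2) = w at *
    have e : w - (1 / 2 : ℂ) * (u + v) = (1 / 2 : ℂ) * ((w - u) + (w - v)) := by ring
    rw [e, norm_mul, (by norm_num : ‖(1 / 2 : ℂ)‖ = 1 / 2)]
    have h7 := norm_add_le (w - u) (w - v)
    linarith
  have hA0 := hA 0 ⟨by linarith, hφ0⟩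
  have hA1 := hA φ ⟨by linarith, le_rfl⟩
  have hT := evenPart_sub_le K a hG φ hφ0
  have e0 : Complex.exp (-Complex.I * (t : ℂ) * ((Real.sin 0 : ℝ) : ℂ) ^ 2) = 1 := by simp
  rw [e0] at hA0
  have e1 : -Complex.I * (t : ℂ) * ((Real.sin φ : ℝ) : ℂ) ^ 2
      = ((-(t * Δ) : ℝ) : ℂ) * Complex.I := by
    rw [← Complex.ofReal_pow, hsinsq]; push_cast; ring
  rw [e1] at hA1
  set w := Complex.exp (((-(t * Δ) : ℝ) : ℂ) * Complex.I) with hw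
  have him : 3 / 4 * (t * Δ) ≤ ‖w - 1‖ := by
    have h5 := Complex.abs_im_le_norm (w - 1)
    have h6 : (w - 1).im = -Real.sin (t * Δ) := by
      rw [Complex.sub_im, hw, Complex.exp_ofReal_mul_I_im, Real.sin_neg]; simp
    rw [h6, abs_neg] at h5
    have h7 := Real.sin_gt_sub_cube hy0
    have h8 := le_abs_self (Real.sin (t * Δ))
    nlinarith [mul_nonneg hy0.le (mul_nonneg (sub_nonneg.mpr hy1) (by linarith : 0 ≤ 1 + t * Δ))]
  have htri : ‖w - 1‖ ≤ ε + (K : ℝ) ^ 2 * φ ^ 2 + ε := by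
    have e : w - 1 = (w - evenPart K a φ) + (evenPart K a φ - evenPart K a 0)
      + -(1 - evenPart K a 0) := by ring
    rw [e]
    refine (norm_add₃_le).trans ?_
    rw [norm_neg]
    linarith
  have hφs : 2 / Real.pi * φ ≤ Real.sqrt Δ := by
    rw [← hsin]; exact Real.mul_le_sin hφ0 hφ1
  have hφ2 : φ ^ 2 ≤ Real.pi ^ 2 / 4 * Δ := by
    have h5 : φ ≤ Real.pi / 2 * Real.sqrt Δ := by
      have : φ = Real.pi / 2 * (2 / Real.pi * φ) := by field_simp
      rw [this]; gcongr
    calc φ ^ 2 ≤ (Real.pi / 2 * Real.sqrt Δ) ^ 2 := by gcongr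
      _ = _ := by rw [mul_pow, Real.sq_sqrt hΔ0.le]; ring
  have hfin : t * Δ / 2 ≤ (K : ℝ) ^ 2 * (Real.pi ^ 2 / 4 * Δ) := by
    have : (K : ℝ) ^ 2 * φ ^ 2 ≤ (K : ℝ) ^ 2 * (Real.pi ^ 2 / 4 * Δ) := by gcongr
    linarith
  have hfin2 : 2 * t ≤ (K * Real.pi) ^ 2 := by
    have : (2 * t) * Δ ≤ (K * Real.pi) ^ 2 * Δ := by nlinarith
    exact le_of_mul_le_mul_right this hΔ0
  rw [one_div, inv_mul_le_iff₀ hpi, mul_comm Real.pi]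
  exact Real.sqrt_le_iff.mpr ⟨by positivity, hfin2⟩
end

section
/- Let K be a nonnegative integer and let Q(θ) = Σ_{k=−K}^{K} a_k e^{ikθ} with a_k ∈ ℂ be a trigonometric polynomial of degree at most K such that |Q(θ)| ≤ 2 for all θ ∈ ℝ. Then for every θ_M ≥ 0, |Q(θ_M)| ≤ |Q(0)| + θ_M·|Q'(0)| + K²·θ_M². -/
lemma riesz_nodes (K : ℕ) (hK : 0 < K) :
    ∃ t : ℕ → ℝ, (∀ j, Complex.exp (Complex.I * (t j : ℂ)) ^ (2 * K) = -1) ∧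
      (∀ p, 0 < p → p < 2 * K →
        ∑ j ∈ Finset.range (2 * K), Complex.exp (Complex.I * (t j : ℂ)) ^ p = 0) := by
  have hKc : (K : ℂ) ≠ 0 := by exact_mod_cast hK.ne'
  have hprim := Complex.isPrimitiveRoot_exp (2 * K) (by omega)
  set ω := Complex.exp (2 * Real.pi * Complex.I / ((2 * K : ℕ) : ℂ)) with hω
  set ζ := Complex.exp (Complex.I * ((Real.pi / (2 * K) : ℝ) : ℂ)) with hζ
  have hz : ∀ j : ℕ, Complex.exp (Complex.I * ((Real.pi / (2 * K) + j * (2 * Real.pi / (2 * K)) : ℝ) : ℂ))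
      = ζ * ω ^ j := by
    intro j
    rw [hζ, hω, ← Complex.exp_nat_mul, ← Complex.exp_add]
    congr 1
    push_cast
    field_simp
  have hζp : ζ ^ (2 * K) = -1 := by
    rw [hζ, ← Complex.exp_nat_mul, ← Complex.exp_pi_mul_I]
    congr 1
    push_cast
    field_simp
  refine ⟨fun j => Real.pi / (2 * K) + j * (2 * Real.pi / (2 * K)), ?_, ?_⟩
  · intro j
    simp only [hz]
    rw [mul_pow, hζp, ← pow_mul, mul_comm j, pow_mul, hprim.pow_eq_one]
    simp
  · intro p hp hp2
    simp only [hz]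
    have h1 : ω ^ p ≠ 1 := hprim.pow_ne_one_of_pos_of_lt hp.ne' hp2
    have h2 : ∀ j, (ζ * ω ^ j) ^ p = ζ ^ p * (ω ^ p) ^ j := by intro j; ring
    simp only [h2]
    rw [← Finset.mul_sum, geom_sum_eq h1, ← pow_mul, mul_comm p, pow_mul, hprim.pow_eq_one]
    simp

lemma riesz_weights (K : ℕ) (hK : 0 < K) :
    ∃ (t w : ℕ → ℝ), (∀ j, 0 ≤ w j) ∧
      (∀ p, p ≤ 2 * K → ∑ j ∈ Finset.range (2 * K),
        (w j : ℂ) * Complex.exp (Complex.I * (t j : ℂ)) ^ p = K * (K - p)) := by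
  obtain ⟨t, h1, h2⟩ := riesz_nodes K hK
  have hKc : (K : ℂ) ≠ 0 := by exact_mod_cast hK.ne'
  set z : ℕ → ℂ := fun j => Complex.exp (Complex.I * (t j : ℂ)) with hz
  have hz1 : ∀ j, z j ^ (2 * K) = -1 := h1
  have hz2 : ∀ p, 0 < p → p < 2 * K → ∑ j ∈ Finset.range (2 * K), z j ^ p = 0 := h2
  have hnorm : ∀ j, z j * (starRingEnd ℂ) (z j) = 1 := by
    intro j
    rw [Complex.mul_conj, Complex.normSq_eq_norm_sq, hz]
    simp only [mul_comm Complex.I, Complex.norm_exp_ofReal_mul_I]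
    simp
  have hne : ∀ j, z j - 1 ≠ 0 := by
    intro j h
    have h3 := hz1 j
    rw [sub_eq_zero.mp h] at h3
    norm_num at h3
  refine ⟨t, fun j => (Complex.normSq (z j - 1))⁻¹,
    fun j => inv_nonneg.mpr (Complex.normSq_nonneg _), ?_⟩
  set w : ℕ → ℂ := fun j => (((Complex.normSq (z j - 1))⁻¹ : ℝ) : ℂ) with hw
  have hrel : ∀ j, w j * (2 * z j - z j ^ 2 - 1) = z j := by
    intro j
    have h3 : z j * ((Complex.normSq (z j - 1) : ℝ) : ℂ) = 2 * z j - z j ^ 2 - 1 := by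
      rw [← Complex.mul_conj, map_sub, map_one]
      linear_combination (z j - 1) * hnorm j
    have h4 : ((Complex.normSq (z j - 1) : ℝ) : ℂ) ≠ 0 := by
      simpa using hne j
    rw [← h3, hw]
    push_cast
    field_simp
  set D : ℕ → ℂ := fun p => ∑ j ∈ Finset.range (2 * K), w j * z j ^ p with hD
  have hrec : ∀ p, D (p + 2) = 2 * D (p + 1) - D p - ∑ j ∈ Finset.range (2 * K), z j ^ (p + 1) := by
    intro p
    simp only [hD, Finset.mul_sum, ← Finset.sum_sub_distrib]
    refine Finset.sum_congr rfl fun j _ => ?_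
    linear_combination (-z j ^ p) * hrel j
  have hper : ∀ p, D (p + 2 * K) = - D p := by
    intro p
    simp only [hD, ← Finset.sum_neg_distrib]
    refine Finset.sum_congr rfl fun j _ => ?_
    rw [pow_add, hz1]; ring
  have hlin : ∀ p, p + 1 ≤ 2 * K → D p = D 0 + p * (D 1 - D 0) ∧
      D (p + 1) = D 0 + (p + 1) * (D 1 - D 0) := by
    intro p
    induction p with
    | zero => intro _; constructor <;> simp
    | succ p ih =>
      intro hp
      obtain ⟨ha, hb⟩ := ih (by omega)
      refine ⟨by rw [hb]; push_cast; ring, ?_⟩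
      rw [hrec p, hz2 (p + 1) (by omega) (by omega), ha, hb]
      push_cast; ring
  obtain ⟨m, hm⟩ : ∃ m, 2 * K = m + 1 := ⟨2 * K - 1, by omega⟩
  have hmc : (2 * K : ℂ) = m + 1 := by exact_mod_cast hm
  obtain ⟨e1, e2⟩ := hlin m hm.ge
  have e3 := hper 0
  have e4 := hper 1
  have e5 := hrec m
  have e6 : ∑ j ∈ Finset.range (2 * K), z j ^ (m + 1) = -(2 * K) := by
    rw [← hm]; simp [hz1]
  rw [e6] at e5
  rw [zero_add, hm, e2] at e3
  rw [show 1 + 2 * K = m + 2 by omega, e5, e2, e1] at e4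
  have hd : D 1 - D 0 = -K := by
    linear_combination (e4 - e3) / 2
  have hD0 : D 0 = K ^ 2 := by
    rw [hd] at e3
    linear_combination e3 / 2 - K / 2 * hmc
  intro p hp
  change D p = _
  rcases p with _ | p
  · rw [hD0]; push_cast; ring
  · rw [(hlin p hp).2, hd, hD0]; push_cast; ring

lemma trig_bernstein (K : ℕ) (a : ℤ → ℂ) (M : ℝ)
    (h : ∀ θ : ℝ, ‖∑ k ∈ Finset.Icc (-(K : ℤ)) (K : ℤ),
      a k * Complex.exp (Complex.I * (k : ℂ) * (θ : ℂ))‖ ≤ M) (θ : ℝ) :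
    ‖∑ k ∈ Finset.Icc (-(K : ℤ)) (K : ℤ),
      (a k * (Complex.I * k)) * Complex.exp (Complex.I * (k : ℂ) * (θ : ℂ))‖ ≤ K * M := by
  rcases Nat.eq_zero_or_pos K with rfl | hK
  · simp
  obtain ⟨t, w, hw, hs⟩ := riesz_weights K hK
  have key : ∑ j ∈ Finset.range (2 * K), ((w j : ℂ) * Complex.exp (Complex.I * (t j : ℂ)) ^ K) *
      (∑ k ∈ Finset.Icc (-(K : ℤ)) (K : ℤ),
        a k * Complex.exp (Complex.I * (k : ℂ) * ((θ + t j : ℝ) : ℂ))) =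
      (Complex.I * K) * ∑ k ∈ Finset.Icc (-(K : ℤ)) (K : ℤ),
      (a k * (Complex.I * k)) * Complex.exp (Complex.I * (k : ℂ) * (θ : ℂ)) := by
    simp only [Finset.mul_sum]
    rw [Finset.sum_comm]
    refine Finset.sum_congr rfl fun k hk => ?_
    rw [Finset.mem_Icc] at hk
    obtain ⟨p, hp⟩ := Int.eq_ofNat_of_zero_le (show 0 ≤ k + K by omega)
    have hkc : (k : ℂ) = p - K := by
      have : k = p - K := by omega
      rw [this]; push_cast; ring
    have hsp := hs p (by omega)
    have : ∀ j ∈ Finset.range (2 * K), (w j : ℂ) * Complex.exp (Complex.I * (t j : ℂ)) ^ K *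
        (a k * Complex.exp (Complex.I * (k : ℂ) * ((θ + t j : ℝ) : ℂ))) =
        (a k * Complex.exp (Complex.I * (k : ℂ) * (θ : ℂ))) *
        ((w j : ℂ) * Complex.exp (Complex.I * (t j : ℂ)) ^ p) := by
      intro j _
      have h3 : Complex.exp (Complex.I * (t j : ℂ)) ^ K *
          Complex.exp (Complex.I * (k : ℂ) * ((θ + t j : ℝ) : ℂ)) =
          Complex.exp (Complex.I * (k : ℂ) * (θ : ℂ)) * Complex.exp (Complex.I * (t j : ℂ)) ^ p := by
        rw [← Complex.exp_nat_mul, ← Complex.exp_nat_mul, ← Complex.exp_add, ← Complex.exp_add]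
        congr 1
        rw [hkc]; push_cast; ring
      linear_combination (w j : ℂ) * a k * h3
    rw [Finset.sum_congr rfl this, ← Finset.mul_sum, hsp, hkc]
    linear_combination (-(K : ℂ) * a k * (p - K) * Complex.exp (Complex.I * ((p : ℂ) - K) * (θ : ℂ))) * Complex.I_sq
  have hw0 : ∑ j ∈ Finset.range (2 * K), w j = (K : ℝ) ^ 2 := by
    have := hs 0 (by omega)
    simp only [pow_zero, mul_one, Nat.cast_zero, sub_zero] at this
    rw [sq]
    exact_mod_cast this
  have hb : (K : ℝ) * ‖∑ k ∈ Finset.Icc (-(K : ℤ)) (K : ℤ),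
      (a k * (Complex.I * k)) * Complex.exp (Complex.I * (k : ℂ) * (θ : ℂ))‖ ≤ K * (K * M) := by
    have h5 := congrArg norm key
    rw [norm_mul, norm_mul, Complex.norm_I, one_mul, Complex.norm_natCast] at h5
    rw [← h5]
    calc _ ≤ ∑ j ∈ Finset.range (2 * K), w j * M := by
          refine norm_sum_le_of_le _ fun j _ => ?_
          rw [norm_mul, norm_mul, norm_pow, mul_comm Complex.I (t j : ℂ),
            Complex.norm_exp_ofReal_mul_I, one_pow, mul_one, Complex.norm_real,
            Real.norm_of_nonneg (hw j)]
          exact mul_le_mul_of_nonneg_left (h _) (hw j)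
      _ = K * (K * M) := by rw [← Finset.sum_mul, hw0]; ring
  exact le_of_mul_le_mul_left hb (by exact_mod_cast hK)

lemma trig_hasDerivAt (K : ℕ) (a : ℤ → ℂ) (θ : ℝ) :
    HasDerivAt (fun θ : ℝ => ∑ k ∈ Finset.Icc (-(K : ℤ)) (K : ℤ),
      a k * Complex.exp (Complex.I * (k : ℂ) * (θ : ℂ)))
      (∑ k ∈ Finset.Icc (-(K : ℤ)) (K : ℤ),
      (a k * (Complex.I * k)) * Complex.exp (Complex.I * (k : ℂ) * (θ : ℂ))) θ := by
  refine HasDerivAt.fun_sum fun k _ => ?_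
  have h1 : HasDerivAt (fun θ : ℝ => Complex.I * (k : ℂ) * (θ : ℂ)) (Complex.I * (k : ℂ)) θ := by
    simpa using (Complex.ofRealCLM.hasDerivAt (x := θ)).const_mul (Complex.I * (k : ℂ))
  exact ((h1.cexp).const_mul (a k)).congr_deriv (by ring)

/-- If `Q(θ) = Σ_{k=−K}^{K} aₖ e^{ikθ}` is a trigonometric polynomial
of degree at most `K` with `|Q(θ)| ≤ 2` for all real `θ`, then for every `θ_M ≥ 0`,
`|Q(θ_M)| ≤ |Q(0)| + θ_M·|Q'(0)| + K²·θ_M²`. -/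
theorem trig_poly_taylor_bound (K : ℕ) (a : ℤ → ℂ) :
    let Q : ℝ → ℂ := fun θ =>
      ∑ k ∈ Finset.Icc (-(K : ℤ)) (K : ℤ), a k * Complex.exp (Complex.I * (k : ℂ) * (θ : ℂ))
    (∀ θ : ℝ, ‖Q θ‖ ≤ 2) →
    ∀ θM : ℝ, 0 ≤ θM →
      ‖Q θM‖ ≤ ‖Q 0‖ + θM * ‖deriv Q 0‖ + (K : ℝ) ^ 2 * θM ^ 2 := by
  intro Q hQ θM hθ
  set b : ℤ → ℂ := fun k => a k * (Complex.I * k) with hb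
  set Q1 : ℝ → ℂ := fun θ => ∑ k ∈ Finset.Icc (-(K : ℤ)) (K : ℤ),
    b k * Complex.exp (Complex.I * (k : ℂ) * (θ : ℂ)) with hQ1
  have d1 : ∀ θ, HasDerivAt Q (Q1 θ) θ := trig_hasDerivAt K a
  have d2 : ∀ θ, HasDerivAt Q1 _ θ := trig_hasDerivAt K b
  have b2 := trig_bernstein K b _ (trig_bernstein K a 2 hQ)
  rw [(d1 0).deriv]
  have l1 : ∀ x : ℝ, 0 ≤ x → ‖Q1 x - Q1 0‖ ≤ K * (K * 2) * x := by
    intro x hx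
    have := Convex.norm_image_sub_le_of_norm_hasDerivWithin_le (s := Set.univ) (x := 0) (y := x)
      (fun y _ => (d2 y).hasDerivWithinAt) (fun y _ => b2 y) convex_univ trivial trivial
    simpa [abs_of_nonneg hx] using this
  have dg : ∀ x : ℝ, HasDerivAt (fun x : ℝ => Q x - Q 0 - (x : ℂ) * Q1 0) (Q1 x - Q1 0) x := by
    intro x
    have h1 : HasDerivAt (fun x : ℝ => (x : ℂ) * Q1 0) (Q1 0) x := by
      simpa using (Complex.ofRealCLM.hasDerivAt (x := x)).mul_const (Q1 0)
    exact ((d1 x).sub_const _).sub h1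
  have dB : ∀ x : ℝ, HasDerivAt (fun x : ℝ => (K : ℝ) ^ 2 * x ^ 2) (K * (K * 2) * x) x := by
    intro x
    exact ((hasDerivAt_pow 2 x).const_mul ((K : ℝ) ^ 2)).congr_deriv (by push_cast; ring)
  have l2 : ‖Q θM - Q 0 - (θM : ℂ) * Q1 0‖ ≤ (K : ℝ) ^ 2 * θM ^ 2 :=
    image_norm_le_of_norm_deriv_right_le_deriv_boundary (a := 0) (b := θM)
      (f := fun x : ℝ => Q x - Q 0 - (x : ℂ) * Q1 0)
      (fun x _ => (dg x).continuousAt.continuousWithinAt)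
      (fun x _ => (dg x).hasDerivWithinAt) (B := fun x : ℝ => (K : ℝ) ^ 2 * x ^ 2) (by simp) dB
      (fun x hx => l1 x hx.1) ⟨hθ, le_rfl⟩
  calc ‖Q θM‖ = ‖Q 0 + (θM : ℂ) * Q1 0 + (Q θM - Q 0 - (θM : ℂ) * Q1 0)‖ := by congr 1; ring
    _ ≤ ‖Q 0‖ + ‖(θM : ℂ) * Q1 0‖ + ‖Q θM - Q 0 - (θM : ℂ) * Q1 0‖ := norm_add₃_le
    _ ≤ _ := by
      rw [norm_mul, Complex.norm_real, Real.norm_of_nonneg hθ]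
      gcongr
end
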